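/- For each irrational x ∈ (0,1) and each n ≥ 2, let m = m(x,n) and r = r(x,n) be the unique integers with ∑_{i=1}^m a_i ≤ n < ∑_{i=1}^{m+1} a_i and r = n − ∑_{i=1}^m a_i, and set |I_n^{𝒮ℬ}(x)| = 1/(((r+1)q_m + q_{m−1}) q_m), which is the length of the Stern-Brocot interval of depth n containing x. Then the functions x ↦ −log |I_n^{𝒮ℬ}(x)| / ((π²/6)·(n/log n)) converge to 1 in Lebesgue measure as n → ∞; that is, the Stern-Brocot sequence of partitions admits f_{𝒮ℬ}(n) = (π²/6)·n/log n (for n ≥ 2) as weight function in measure with respect to the Lebesgue measure. -/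

import Mathlib

open MeasureTheory Filter Set

noncomputable section

/-- The set `E_n^ℱ` of endpoints of the Farey partition `F_n`: rationals of `[0,1]` whose
denominator in lowest terms is at most `n+1`. -/
def fareyPts (n : ℕ) : Set ℝ :=
  {x | ∃ p q : ℕ, q ≠ 0 ∧ q ≤ n + 1 ∧ p ≤ q ∧ Nat.gcd p q = 1 ∧ x = (p : ℝ) / q}

/-- The interval `I_n^ℱ(x)` of the Farey partition `F_n` containing `x`: the open interval
between the largest Farey point of order `n+1` below `x` and the smallest one above `x`. -/
def fareyInterval (n : ℕ) (x : ℝ) : Set ℝ :=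
  Set.Ioo (sSup (fareyPts n ∩ Set.Iio x)) (sInf (fareyPts n ∩ Set.Ioi x))

/-- The partial quotient `a_{m+1}` of the continued fraction expansion of `x ∈ (0,1)`,
obtained from the Gauss map: `cfa x m = ⌊1 / T_G^m x⌋` where `T_G y = {1/y}`. -/
def cfa (x : ℝ) (m : ℕ) : ℕ := ⌊1 / ((fun y => Int.fract (1 / y))^[m] x)⌋₊

/-- Numerators of the convergents of `x`, shifted by one: `cfp x (m+1) = p_m`, with
`p_{-1} = 1`, `p_0 = 0`, `p_{m+1} = a_{m+1} p_m + p_{m-1}`. -/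
def cfp (x : ℝ) : ℕ → ℕ
  | 0 => 1
  | 1 => 0
  | m + 2 => cfa x m * cfp x (m + 1) + cfp x m

/-- Denominators of the convergents of `x`, shifted by one: `cfq x (m+1) = q_m`, with
`q_{-1} = 0`, `q_0 = 1`, `q_{m+1} = a_{m+1} q_m + q_{m-1}`. -/
def cfq (x : ℝ) : ℕ → ℕ
  | 0 => 0
  | 1 => 1
  | m + 2 => cfa x m * cfq x (m + 1) + cfq x m

/-- The fundamental interval `I_n^{𝒞ℱ}(x)` of depth `n` of the continued fraction
expansion: the open interval with endpoints `p_n/q_n` and `(p_n+p_{n-1})/(q_n+q_{n-1})`,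
the former being the left endpoint iff `n` is even. -/
def cfInterval (x : ℝ) (n : ℕ) : Set ℝ :=
  if Even n then
    Set.Ioo ((cfp x (n + 1) : ℝ) / (cfq x (n + 1) : ℝ))
      (((cfp x (n + 1) + cfp x n : ℕ) : ℝ) / ((cfq x (n + 1) + cfq x n : ℕ) : ℝ))
  else
    Set.Ioo (((cfp x (n + 1) + cfp x n : ℕ) : ℝ) / ((cfq x (n + 1) + cfq x n : ℕ) : ℝ))
      ((cfp x (n + 1) : ℝ) / (cfq x (n + 1) : ℝ))

/-- The Lochs index `L_n(x, 𝒞ℱ, ℱ)` from the continued fraction sequence of partitions to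
the Farey sequence of partitions. -/
def lochsCFtoF (x : ℝ) (n : ℕ) : ℕ :=
  sSup {ℓ : ℕ | cfInterval x n ⊆ fareyInterval ℓ x}

/-- The Lochs index `L_n(x, ℱ, 𝒞ℱ)` from the Farey sequence of partitions to the
continued fraction sequence of partitions. -/
def lochsFtoCF (x : ℝ) (n : ℕ) : ℕ :=
  sSup {ℓ : ℕ | fareyInterval n x ⊆ cfInterval x ℓ}

/-- `∑_{i=1}^m a_i`, the sum of the first `m` partial quotients of `x`. -/
def sumA (x : ℝ) (m : ℕ) : ℕ := ∑ i ∈ Finset.range m, cfa x i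

/-- `m(x,n)`: the unique `m` with `∑_{i=1}^m a_i ≤ n < ∑_{i=1}^{m+1} a_i`. -/
def sbm (x : ℝ) (n : ℕ) : ℕ := sSup {m : ℕ | sumA x m ≤ n}

/-- `r(x,n) = n − ∑_{i=1}^{m(x,n)} a_i`. -/
def sbr (x : ℝ) (n : ℕ) : ℕ := n - sumA x (sbm x n)

/-- The length `|I_n^{𝒮ℬ}(x)| = 1/(((r+1)q_m + q_{m-1}) q_m)` of the Stern-Brocot interval
of depth `n` containing `x`, where `m = m(x,n)`, `r = r(x,n)`. -/
def sbLen (x : ℝ) (n : ℕ) : ℝ :=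
  1 / (((((sbr x n + 1) * cfq x (sbm x n + 1) + cfq x (sbm x n) : ℕ)) : ℝ) *
    (cfq x (sbm x n + 1) : ℝ))

/-!
The Gauss map preserves the Gauss measure, which dominates half of Lebesgue measure, and its
transfer operator contracts Lipschitz seminorms. Covariances along orbits therefore decay
geometrically, so Birkhoff sums have variance linear in their length, and Chebyshev's inequality
yields two weak laws: `log q_m / m → π² / (12 log 2)`, and, after truncating the partial quotients
at a level slightly above `m`, Khinchin's `(a_1 + ⋯ + a_m) / (m log m) → 1 / log 2`. By Khinchin's
law the index `m(x, n)` lies between `a n / log n` and `b n / log n` for any `a < log 2 < b`. As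
`-log |I_n(x)|` differs from `2 log q_{m(x, n)}` by `O(log n)`, its limit is
`2 · π² / (12 log 2) · log 2 = π² / 6` times `n / log n`.
-/

open ProbabilityTheory Topology
open scoped ENNReal NNReal

section InMeasure

variable {ι ι' α E : Type*} [MeasurableSpace α] {μ ν : Measure α} {l : Filter ι} {l' : Filter ι'}

/-- The filter of convergence in measure: a property of `(i, x)` holds eventually along it if the
measure of the set of `x` where it fails tends to `0` along `l`. Convergence in measure to a
constant is convergence along this filter, so limits in measure inherit the calculus of limits. -/
def inMeasure (l : Filter ι) (μ : Measure α) : Filter (ι × α) where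
  sets := {s | Tendsto (fun i => μ {x | (i, x) ∉ s}) l (𝓝 0)}
  univ_sets := by simpa using tendsto_const_nhds
  sets_of_superset hs hst :=
    tendsto_of_tendsto_of_tendsto_of_le_of_le tendsto_const_nhds hs (fun _ => zero_le)
      fun i => measure_mono fun x hx hxs => hx (hst hxs)
  inter_sets hs ht := by
    refine tendsto_of_tendsto_of_tendsto_of_le_of_le tendsto_const_nhds
      (by simpa using hs.add ht) (fun _ => zero_le) fun i =>
      (measure_mono fun x hx => ?_).trans (measure_union_le _ _)
    exact not_and_or.1 hx

lemma eventually_inMeasure {p : ι × α → Prop} :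
    (∀ᶠ z in inMeasure l μ, p z) ↔ Tendsto (fun i => μ {x | ¬ p (i, x)}) l (𝓝 0) :=
  Iff.rfl

lemma eventually_inMeasure_of_ae {p : ι × α → Prop} (h : ∀ᶠ i in l, ∀ᵐ x ∂μ, p (i, x)) :
    ∀ᶠ z in inMeasure l μ, p z :=
  eventually_inMeasure.2 <| tendsto_const_nhds.congr' <| h.mono fun _ hi => (ae_iff.1 hi).symm

lemma tendsto_fst_inMeasure : Tendsto Prod.fst (inMeasure l μ) l :=
  fun _ hs => eventually_inMeasure_of_ae <| mem_of_superset hs fun _ hi => ae_of_all _ fun _ => hi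

lemma tendsto_inMeasure_of_tendsto {m : ι' → ι} (hm : Tendsto m l' l) :
    Tendsto (fun z : ι' × α => (m z.1, z.2)) (inMeasure l' μ) (inMeasure l μ) :=
  fun _ hs => Tendsto.comp (y := l) hs hm

lemma inMeasure_mono {C : ℝ≥0∞} (hC : C ≠ ∞) (hν : ν ≤ C • μ) :
    inMeasure l ν ≤ inMeasure l μ := fun _ hs =>
  tendsto_of_tendsto_of_tendsto_of_le_of_le tendsto_const_nhds
    (by simpa using ENNReal.Tendsto.const_mul hs (Or.inr hC)) (fun _ => zero_le) fun _ => hν _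

lemma tendstoInMeasure_const_iff [PseudoEMetricSpace E] {f : ι → α → E} {c : E} :
    TendstoInMeasure μ f l (fun _ => c) ↔
      Tendsto (fun z : ι × α => f z.1 z.2) (inMeasure l μ) (𝓝 c) := by
  simp only [TendstoInMeasure, Metric.nhds_basis_eball.tendsto_right_iff, eventually_inMeasure,
    Metric.mem_eball, not_lt]

lemma tendsto_inMeasure_of_tendsto_variance [IsFiniteMeasure μ] {X : ι → α → ℝ} {c : ℝ}
    (hX : ∀ i, MemLp (X i) 2 μ) (hmean : Tendsto (fun i => ∫ x, X i x ∂μ) l (𝓝 c))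
    (hvar : Tendsto (fun i => Var[X i; μ]) l (𝓝 0)) :
    Tendsto (fun z : ι × α => X z.1 z.2) (inMeasure l μ) (𝓝 c) := by
  have hcenter : Tendsto (fun z : ι × α => X z.1 z.2 - ∫ x, X z.1 x ∂μ) (inMeasure l μ) (𝓝 0) := by
    refine Metric.tendsto_nhds.2 fun ε hε => ?_
    have hbound : Tendsto (fun i => ENNReal.ofReal (Var[X i; μ] / ε ^ 2)) l (𝓝 0) := by
      simpa using ENNReal.tendsto_ofReal (hvar.div_const (ε ^ 2))
    refine tendsto_of_tendsto_of_tendsto_of_le_of_le tendsto_const_nhds hbound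
      (fun _ => zero_le) fun i => ?_
    simpa [Real.dist_eq] using meas_ge_le_variance_div_sq (hX i) hε
  simpa using hcenter.add (hmean.comp tendsto_fst_inMeasure)

end InMeasure

section Birkhoff

variable {α : Type*} [MeasurableSpace α] {μ : Measure α} {T : α → α}

lemma memLp_birkhoffSum {f : α → ℝ} {p : ℝ≥0∞} (hf : MemLp f p μ)
    (hT : MeasurePreserving T μ μ) (m : ℕ) : MemLp (birkhoffSum T f m) p μ :=
  memLp_finsetSum _ fun i _ => hf.comp_measurePreserving (hT.iterate i)

lemma integral_comp_iterate {f : α → ℝ} (hf : AEStronglyMeasurable f μ)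
    (hT : MeasurePreserving T μ μ) (k : ℕ) : ∫ x, f (T^[k] x) ∂μ = ∫ x, f x ∂μ := by
  have hmap := (hT.iterate k).map_eq
  conv_rhs => rw [← hmap]
  rw [integral_map (hT.iterate k).aemeasurable (by rwa [hmap])]

lemma integral_birkhoffSum {f : α → ℝ} (hf : Integrable f μ) (hT : MeasurePreserving T μ μ)
    (m : ℕ) : ∫ x, birkhoffSum T f m x ∂μ = m * ∫ x, f x ∂μ := by
  simp only [birkhoffSum]
  rw [integral_finsetSum (f := fun k x => f (T^[k] x)) _
    fun k _ => (hT.iterate k).integrable_comp_of_integrable hf]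
  simp [integral_comp_iterate hf.1 hT]

lemma variance_birkhoffSum_le [IsProbabilityMeasure μ] {f : α → ℝ} {ρ : ℕ → ℝ} {B : ℝ}
    (hT : MeasurePreserving T μ μ) (hf : MemLp f 2 μ)
    (hcov : ∀ j, cov[f, f ∘ T^[j + 1]; μ] ≤ ρ j) (hB : ∀ m, ∑ j ∈ Finset.range m, ρ j ≤ B) (m : ℕ) :
    Var[birkhoffSum T f m; μ] ≤ m * (Var[f; μ] + 2 * B) := by
  induction m with
  | zero => simp [variance_zero]
  | succ m ih =>
    have hmem (k : ℕ) : MemLp (f ∘ T^[k]) 2 μ := hf.comp_measurePreserving (hT.iterate k)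
    have hsum : birkhoffSum T f (m + 1) = f + birkhoffSum T f m ∘ T := by
      ext x; exact birkhoffSum_succ' T f m x
    have hshift : birkhoffSum T f m ∘ T = fun x => ∑ k ∈ Finset.range m, (f ∘ T^[k + 1]) x := by
      ext x; simp [birkhoffSum]
    have hvar : Var[birkhoffSum T f m ∘ T; μ] = Var[birkhoffSum T f m; μ] :=
      hT.variance_fun_comp (memLp_birkhoffSum hf hT m).1.aemeasurable
    have hcross : cov[f, birkhoffSum T f m ∘ T; μ] ≤ B := by
      rw [hshift, covariance_fun_sum_right' (fun k _ => hmem (k + 1)) hf]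
      exact (Finset.sum_le_sum fun k _ => hcov k).trans (hB m)
    rw [hsum, variance_add hf ((memLp_birkhoffSum hf hT m).comp_measurePreserving hT), hvar]
    push_cast
    linarith

end Birkhoff

section GaussMap

lemma hasSum_one_div_add_mul_add_one {a : ℝ} (ha : 0 < a) :
    HasSum (fun k : ℕ => 1 / ((k + a) * (k + a + 1))) (1 / a) := by
  rw [hasSum_iff_tendsto_nat_of_nonneg fun k => by positivity]
  have hpartial (n : ℕ) :
      ∑ k ∈ Finset.range n, 1 / (((k : ℝ) + a) * (k + a + 1)) = 1 / a - 1 / (n + a) := by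
    have htelescope := Finset.sum_range_sub' (fun k : ℕ => 1 / ((k : ℝ) + a)) n
    rw [Nat.cast_zero, zero_add] at htelescope
    rw [← htelescope]
    refine Finset.sum_congr rfl fun k _ => ?_
    have : (k : ℝ) + a ≠ 0 := by positivity
    have : (k : ℝ) + a + 1 ≠ 0 := by positivity
    push_cast
    field_simp
    ring
  simp only [hpartial]
  simpa using (tendsto_atTop_add_const_right _ a tendsto_natCast_atTop_atTop).inv_tendsto_atTop
    |>.const_sub (1 / a)

/-- The Gauss map `x ↦ {1/x}`, the shift of the continued fraction expansion. -/
def gaussMap (x : ℝ) : ℝ := Int.fract (1 / x)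

/-- The inverse branch of the Gauss map on `(1/(k+2), 1/(k+1)]`, the set where the first partial
quotient is `k + 1`. -/
def gaussBranch (k : ℕ) (x : ℝ) : ℝ := 1 / (k + 1 + x)

/-- The weight of the `k`-th inverse branch in the transfer operator of the Gauss map with respect
to the Gauss measure. -/
def gaussWeight (k : ℕ) (x : ℝ) : ℝ := (1 + x) / ((k + 1 + x) * (k + 2 + x))

/-- The density `1 / (log 2 (1 + x))` of the Gauss measure. -/
def gaussDensity (x : ℝ) : ℝ := 1 / (Real.log 2 * (1 + x))

/-- The Gauss measure on `(0, 1)`, the invariant probability measure of the Gauss map. -/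
def gaussMeasure : Measure ℝ :=
  (volume.restrict (Ioo 0 1)).withDensity fun x => ENNReal.ofReal (gaussDensity x)

lemma measurable_gaussMap : Measurable gaussMap := by unfold gaussMap; fun_prop

lemma measurable_gaussBranch (k : ℕ) : Measurable (gaussBranch k) := by
  unfold gaussBranch; fun_prop

lemma measurable_gaussWeight (k : ℕ) : Measurable (gaussWeight k) := by
  unfold gaussWeight; fun_prop

lemma measurable_gaussDensity : Measurable gaussDensity := by unfold gaussDensity; fun_prop

variable {x : ℝ}

lemma log_two_pos : 0 < Real.log 2 := Real.log_pos one_lt_two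

lemma gaussWeight_pos (k : ℕ) (hx : 0 < x) : 0 < gaussWeight k x := by
  unfold gaussWeight; positivity

lemma gaussDensity_pos (hx : 0 < x) : 0 < gaussDensity x := by
  have := log_two_pos
  unfold gaussDensity; positivity

lemma hasSum_gaussWeight (hx : 0 < x) : HasSum (gaussWeight · x) 1 := by
  have h := (hasSum_one_div_add_mul_add_one (show 0 < 1 + x by positivity)).mul_left (1 + x)
  rw [mul_one_div_cancel (by positivity)] at h
  refine h.congr_fun fun k => ?_
  rw [gaussWeight, mul_one_div]
  ring_nf

lemma gaussBranch_mem_Ioo (k : ℕ) (hx : 0 < x) : gaussBranch k x ∈ Ioo (0 : ℝ) 1 := by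
  refine ⟨by unfold gaussBranch; positivity, ?_⟩
  rw [gaussBranch, div_lt_one (by positivity)]
  linarith [k.cast_nonneg (α := ℝ)]

lemma natFloor_one_div_gaussBranch (k : ℕ) (hx : x ∈ Ico (0 : ℝ) 1) :
    ⌊1 / gaussBranch k x⌋₊ = k + 1 := by
  rw [gaussBranch, one_div_one_div, add_assoc, add_comm, add_comm 1 x,
    Nat.floor_add_natCast (by linarith [hx.1]), Nat.floor_add_one hx.1, Nat.floor_eq_zero.2 hx.2]
  ring

lemma gaussMap_gaussBranch (k : ℕ) (hx : x ∈ Ico (0 : ℝ) 1) :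
    gaussMap (gaussBranch k x) = x := by
  rw [gaussMap, gaussBranch, one_div_one_div, add_assoc, Int.fract_natCast_add, Int.fract_one_add,
    Int.fract_eq_self.2 hx]

lemma injOn_gaussBranch (k : ℕ) : InjOn (gaussBranch k) (Ico 0 1) :=
  LeftInvOn.injOn (f₁' := gaussMap) fun _ hx => gaussMap_gaussBranch k hx

lemma one_div_eq_natFloor_add_gaussMap (hx : 0 ≤ x) : 1 / x = ⌊1 / x⌋₊ + gaussMap x := by
  rw [gaussMap, natCast_floor_eq_intCast_floor (by positivity), Int.floor_add_fract]

lemma gaussMap_mem_Ico (x : ℝ) : gaussMap x ∈ Ico (0 : ℝ) 1 :=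
  ⟨Int.fract_nonneg _, Int.fract_lt_one _⟩

lemma iUnion_image_gaussBranch : ⋃ k, gaussBranch k '' Ico 0 1 = Ioc (0 : ℝ) 1 := by
  refine Subset.antisymm (iUnion_subset fun k => ?_) fun x hx => mem_iUnion.2 ?_
  · rintro _ ⟨x, hx, rfl⟩
    have := hx.1
    refine ⟨by unfold gaussBranch; positivity, ?_⟩
    rw [gaussBranch, div_le_one (by positivity)]
    linarith [k.cast_nonneg (α := ℝ)]
  · have hfloor : 1 ≤ ⌊1 / x⌋₊ := Nat.le_floor (by simpa using (one_le_inv₀ hx.1).2 hx.2)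
    refine ⟨⌊1 / x⌋₊ - 1, gaussMap x, gaussMap_mem_Ico x, ?_⟩
    rw [gaussBranch, Nat.cast_sub hfloor, Nat.cast_one, sub_add_cancel,
      ← one_div_eq_natFloor_add_gaussMap hx.1.le, one_div_one_div]

lemma pairwise_disjoint_image_gaussBranch :
    Pairwise (Function.onFun Disjoint fun k => gaussBranch k '' Ico 0 1) := by
  refine fun i j hij => disjoint_left.2 ?_
  rintro _ ⟨x, hx, rfl⟩ ⟨y, hy, hxy⟩
  have hfloor := natFloor_one_div_gaussBranch i hx
  rw [← hxy, natFloor_one_div_gaussBranch j hy] at hfloor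
  omega

lemma hasDerivAt_gaussBranch (k : ℕ) (hx : 0 ≤ x) :
    HasDerivAt (gaussBranch k) (-1 / (k + 1 + x) ^ 2) x := by
  unfold gaussBranch
  simp only [one_div]
  exact ((hasDerivAt_id x).const_add ((k : ℝ) + 1)).fun_inv (by simp only [id]; positivity)

lemma setLIntegral_Ioo_eq_tsum_gaussBranch (F : ℝ → ℝ≥0∞) :
    ∫⁻ x in Ioo 0 1, F x =
      ∑' k : ℕ, ∫⁻ x in Ioo (0 : ℝ) 1,
        ENNReal.ofReal (1 / (k + 1 + x) ^ 2) * F (gaussBranch k x) := by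
  conv_lhs => rw [Measure.restrict_congr_set Ioo_ae_eq_Ioc, ← iUnion_image_gaussBranch]
  rw [lintegral_iUnion (fun k => measurableSet_Ico.image_of_measurable_injOn
      (measurable_gaussBranch k) (injOn_gaussBranch k)) pairwise_disjoint_image_gaussBranch]
  refine tsum_congr fun k => ?_
  rw [lintegral_image_eq_lintegral_abs_deriv_mul measurableSet_Ico
    (fun x hx => (hasDerivAt_gaussBranch k hx.1).hasDerivWithinAt) (injOn_gaussBranch k),
    ← Measure.restrict_congr_set Ioo_ae_eq_Ico]
  simp only [neg_div, abs_neg, abs_div, abs_one, abs_pow, sq_abs]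

lemma lintegral_gaussMeasure (F : ℝ → ℝ≥0∞) :
    ∫⁻ x, F x ∂gaussMeasure = ∫⁻ x in Ioo 0 1, ENNReal.ofReal (gaussDensity x) * F x := by
  rw [gaussMeasure, lintegral_withDensity_eq_lintegral_mul_non_measurable _
    measurable_gaussDensity.ennreal_ofReal (ae_of_all _ fun x => ENNReal.ofReal_lt_top)]
  rfl

lemma ae_mem_Ioo_gaussMeasure : ∀ᵐ x ∂gaussMeasure, x ∈ Ioo (0 : ℝ) 1 :=
  (withDensity_absolutelyContinuous _ _).ae_le (ae_restrict_mem measurableSet_Ioo)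

lemma one_div_sq_mul_gaussDensity_gaussBranch (k : ℕ) (hx : 0 < x) :
    1 / (k + 1 + x) ^ 2 * gaussDensity (gaussBranch k x) = gaussDensity x * gaussWeight k x := by
  have := log_two_pos
  have : (k : ℝ) + 1 + x ≠ 0 := by positivity
  have : (k : ℝ) + 2 + x ≠ 0 := by positivity
  have : (k : ℝ) + 1 + x + 1 ≠ 0 := by positivity
  have : 1 + x ≠ 0 := by positivity
  unfold gaussDensity gaussWeight gaussBranch
  field_simp
  ring

lemma gaussMeasure_eq_sum_map_gaussBranch :
    gaussMeasure = Measure.sum fun k =>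
      (gaussMeasure.withDensity fun x => ENNReal.ofReal (gaussWeight k x)).map (gaussBranch k) := by
  refine Measure.ext_of_lintegral _ fun F hF => ?_
  rw [lintegral_sum_measure, lintegral_gaussMeasure, setLIntegral_Ioo_eq_tsum_gaussBranch]
  refine tsum_congr fun k => ?_
  rw [lintegral_map hF (measurable_gaussBranch k), lintegral_withDensity_eq_lintegral_mul _
    (g := fun x => F (gaussBranch k x)) (measurable_gaussWeight k).ennreal_ofReal
    (hF.comp (measurable_gaussBranch k)), lintegral_gaussMeasure]
  refine setLIntegral_congr_fun measurableSet_Ioo fun x hx => ?_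
  simp only [Pi.mul_apply]
  rw [← mul_assoc, ← mul_assoc, ← ENNReal.ofReal_mul (by positivity),
    ← ENNReal.ofReal_mul (gaussDensity_pos hx.1).le,
    one_div_sq_mul_gaussDensity_gaussBranch k hx.1]

lemma measurePreserving_gaussMap : MeasurePreserving gaussMap gaussMeasure gaussMeasure := by
  refine ⟨measurable_gaussMap, ?_⟩
  have hbranch (k : ℕ) :
      ((gaussMeasure.withDensity fun x => ENNReal.ofReal (gaussWeight k x)).map
        (gaussBranch k)).map gaussMap =
      gaussMeasure.withDensity fun x => ENNReal.ofReal (gaussWeight k x) := by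
    rw [Measure.map_map measurable_gaussMap (measurable_gaussBranch k)]
    refine (Measure.map_congr ?_).trans Measure.map_id
    filter_upwards [(withDensity_absolutelyContinuous _ _).ae_le ae_mem_Ioo_gaussMeasure] with x hx
    exact gaussMap_gaussBranch k ⟨hx.1.le, hx.2⟩
  conv_lhs => rw [gaussMeasure_eq_sum_map_gaussBranch]
  rw [Measure.map_sum measurable_gaussMap.aemeasurable]
  simp only [hbranch]
  rw [← withDensity_tsum fun k => (measurable_gaussWeight k).ennreal_ofReal]
  conv_rhs => rw [← withDensity_one (μ := gaussMeasure)]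
  refine withDensity_congr_ae ?_
  filter_upwards [ae_mem_Ioo_gaussMeasure] with x hx
  rw [tsum_apply (Pi.summable.2 fun _ => ENNReal.summable), ← ENNReal.ofReal_tsum_of_nonneg
    (fun k => (gaussWeight_pos k hx.1).le) (hasSum_gaussWeight hx.1).summable,
    (hasSum_gaussWeight hx.1).tsum_eq, ENNReal.ofReal_one, Pi.one_apply]

lemma gaussMeasure_le_smul_volume :
    gaussMeasure ≤ ENNReal.ofReal (1 / Real.log 2) • volume.restrict (Ioo 0 1) := by
  rw [gaussMeasure, ← withDensity_const]
  refine withDensity_mono ?_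
  filter_upwards [ae_restrict_mem measurableSet_Ioo] with x hx
  refine ENNReal.ofReal_le_ofReal (one_div_le_one_div_of_le log_two_pos ?_)
  exact le_mul_of_one_le_right log_two_pos.le (by linarith [hx.1])

lemma volume_le_smul_gaussMeasure :
    volume.restrict (Icc 0 1) ≤ ENNReal.ofReal 2 • gaussMeasure := by
  rw [gaussMeasure, ← withDensity_smul _ measurable_gaussDensity.ennreal_ofReal,
    ← Measure.restrict_congr_set Ioo_ae_eq_Icc]
  conv_lhs => rw [← withDensity_one (μ := volume.restrict (Ioo (0 : ℝ) 1))]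
  refine withDensity_mono ?_
  filter_upwards [ae_restrict_mem measurableSet_Ioo] with x hx
  have hlog : Real.log 2 ≤ 1 := by linarith [Real.log_two_lt_d9]
  have hdens : 0 < Real.log 2 * (1 + x) := mul_pos log_two_pos (by linarith [hx.1])
  rw [Pi.one_apply, Pi.smul_apply, smul_eq_mul, ← ENNReal.ofReal_mul zero_le_two,
    ENNReal.one_le_ofReal, gaussDensity, mul_one_div, le_div_iff₀ hdens]
  nlinarith [hx.1, hx.2]

lemma ae_irrational_gaussMeasure : ∀ᵐ x ∂gaussMeasure, Irrational x := by
  refine (withDensity_absolutelyContinuous _ _).ae_le (ae_restrict_of_ae ?_)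
  have hcount : (range ((↑) : ℚ → ℝ)).Countable := countable_range _
  exact measure_mono_null (fun x hx => not_not.1 hx) (hcount.measure_zero _)

lemma continuousOn_gaussDensity : ContinuousOn gaussDensity (Ici 0) :=
  continuousOn_const.div (by fun_prop) fun x hx =>
    (mul_pos log_two_pos (by linarith [mem_Ici.1 hx])).ne'

lemma intervalIntegrable_gaussDensity {t : ℝ} (ht : 0 ≤ t) :
    IntervalIntegrable gaussDensity volume 0 t :=
  (continuousOn_gaussDensity.mono fun x hx => by
    rw [uIcc_of_le ht] at hx; exact hx.1).intervalIntegrable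

lemma integral_gaussDensity {t : ℝ} (ht : 0 ≤ t) :
    ∫ x in (0 : ℝ)..t, gaussDensity x = Real.log (1 + t) / Real.log 2 := by
  have hderiv : ∀ x ∈ uIcc 0 t,
      HasDerivAt (fun x => Real.log (1 + x) / Real.log 2) (gaussDensity x) x := by
    intro x hx
    rw [uIcc_of_le ht] at hx
    rw [gaussDensity, mul_comm, ← div_div]
    exact (((hasDerivAt_id x).const_add 1).log (by simp only [id]; linarith [hx.1])).div_const _
  rw [intervalIntegral.integral_eq_sub_of_hasDerivAt hderiv (intervalIntegrable_gaussDensity ht)]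
  simp

lemma gaussMeasure_Ioc {t : ℝ} (ht : t ∈ Icc (0 : ℝ) 1) :
    gaussMeasure (Ioc 0 t) = ENNReal.ofReal (Real.log (1 + t) / Real.log 2) := by
  rw [gaussMeasure, withDensity_apply _ measurableSet_Ioc,
    Measure.restrict_congr_set (Ioo_ae_eq_Ioc (a := (0 : ℝ)) (b := 1)),
    Measure.restrict_restrict measurableSet_Ioc, inter_eq_left.2 (Ioc_subset_Ioc_right ht.2),
    ← integral_gaussDensity ht.1, intervalIntegral.integral_of_le ht.1,
    ofReal_integral_eq_lintegral_ofReal (intervalIntegrable_gaussDensity ht.1).1]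
  filter_upwards [ae_restrict_mem measurableSet_Ioc] with x hx using (gaussDensity_pos hx.1).le

instance : IsProbabilityMeasure gaussMeasure := by
  refine ⟨?_⟩
  have huniv : gaussMeasure univ = gaussMeasure (Ioc 0 1) := measure_congr <| by
    filter_upwards [ae_mem_Ioo_gaussMeasure] with x hx
    exact propext (iff_of_true (mem_univ x) (Ioo_subset_Ioc_self hx))
  rw [huniv, gaussMeasure_Ioc ⟨zero_le_one, le_rfl⟩, one_add_one_eq_two,
    div_self log_two_pos.ne', ENNReal.ofReal_one]

variable {F : ℝ → ℝ}

lemma integrable_gaussWeight_mul (hF : Integrable F gaussMeasure) (k : ℕ) :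
    Integrable (fun x => gaussWeight k x * F (gaussBranch k x)) gaussMeasure := by
  have hmap := hF
  rw [gaussMeasure_eq_sum_map_gaussBranch] at hmap
  replace hmap := (hmap.mono_measure (Measure.le_sum _ k)).comp_measurable
    (measurable_gaussBranch k)
  rw [integrable_withDensity_iff_integrable_smul' (measurable_gaussWeight k).ennreal_ofReal
    (ae_of_all _ fun _ => ENNReal.ofReal_lt_top)] at hmap
  refine hmap.congr ?_
  filter_upwards [ae_mem_Ioo_gaussMeasure] with x hx
  rw [ENNReal.toReal_ofReal (gaussWeight_pos k hx.1).le, smul_eq_mul, Function.comp]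

lemma hasSum_integral_gaussWeight_mul (hF : Integrable F gaussMeasure) :
    HasSum (fun k => ∫ x, gaussWeight k x * F (gaussBranch k x) ∂gaussMeasure)
      (∫ x, F x ∂gaussMeasure) := by
  have hsum := hF
  rw [gaussMeasure_eq_sum_map_gaussBranch] at hsum
  conv => enter [2]; rw [gaussMeasure_eq_sum_map_gaussBranch]
  refine (hasSum_integral_measure hsum).congr_fun fun k => ?_
  rw [integral_map (measurable_gaussBranch k).aemeasurable
    (hsum.mono_measure (Measure.le_sum _ k)).1,
    integral_withDensity_eq_integral_toReal_smul (measurable_gaussWeight k).ennreal_ofReal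
      (ae_of_all _ fun _ => ENNReal.ofReal_lt_top)]
  refine integral_congr_ae ?_
  filter_upwards [ae_mem_Ioo_gaussMeasure] with x hx
  rw [ENNReal.toReal_ofReal (gaussWeight_pos k hx.1).le, smul_eq_mul]

lemma summable_integral_norm_gaussWeight_mul (hF : Integrable F gaussMeasure) :
    Summable fun k => ∫ x, ‖gaussWeight k x * F (gaussBranch k x)‖ ∂gaussMeasure := by
  refine (hasSum_integral_gaussWeight_mul hF.norm).summable.congr fun k =>
    integral_congr_ae ?_
  filter_upwards [ae_mem_Ioo_gaussMeasure] with x hx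
  rw [norm_mul, Real.norm_of_nonneg (gaussWeight_pos k hx.1).le]

/-- The transfer operator of the Gauss map with respect to the Gauss measure, dual to composition
with the Gauss map. -/
def gaussTransfer (g : ℝ → ℝ) (x : ℝ) : ℝ := ∑' k, gaussWeight k x * g (gaussBranch k x)

lemma integral_gaussTransfer (hF : Integrable F gaussMeasure) :
    ∫ x, gaussTransfer F x ∂gaussMeasure = ∫ x, F x ∂gaussMeasure :=
  (hasSum_integral_of_summable_integral_norm (integrable_gaussWeight_mul hF)
    (summable_integral_norm_gaussWeight_mul hF)).unique (hasSum_integral_gaussWeight_mul hF)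

lemma gaussTransfer_comp_gaussMap_mul (φ g : ℝ → ℝ) (hx : x ∈ Ico (0 : ℝ) 1) :
    gaussTransfer (fun y => φ (gaussMap y) * g y) x = φ x * gaussTransfer g x := by
  rw [gaussTransfer, gaussTransfer, ← tsum_mul_left]
  exact tsum_congr fun k => by rw [gaussMap_gaussBranch k hx, mul_left_comm]

lemma integral_comp_gaussMap_mul {φ g : ℝ → ℝ}
    (h : Integrable (fun x => φ (gaussMap x) * g x) gaussMeasure) :
    ∫ x, φ (gaussMap x) * g x ∂gaussMeasure = ∫ x, φ x * gaussTransfer g x ∂gaussMeasure := by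
  rw [← integral_gaussTransfer h]
  refine integral_congr_ae ?_
  filter_upwards [ae_mem_Ioo_gaussMeasure] with x hx
  exact gaussTransfer_comp_gaussMap_mul φ g (Ioo_subset_Ico_self hx)

lemma abs_gaussWeight_sub_le {y : ℝ} (k : ℕ) (hx : x ∈ Ioo (0 : ℝ) 1) (hy : y ∈ Ioo (0 : ℝ) 1) :
    |gaussWeight k x - gaussWeight k y| ≤ |x - y| * (gaussWeight k y / (1 + y)) := by
  obtain ⟨hx0, hx1⟩ := hx
  obtain ⟨hy0, hy1⟩ := hy
  have hk : (0 : ℝ) ≤ k := k.cast_nonneg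
  have hX : 0 < ((k : ℝ) + 1 + x) * (k + 2 + x) := by positivity
  have hY : 0 < ((k : ℝ) + 1 + y) * (k + 2 + y) := by positivity
  have hsub : gaussWeight k x - gaussWeight k y = (x - y) *
      ((k * (k + 1) - (1 + x) * (1 + y)) / ((k + 1 + x) * (k + 2 + x))) *
      (1 / ((k + 1 + y) * (k + 2 + y))) := by
    unfold gaussWeight
    field_simp
    ring
  have hdiv : gaussWeight k y / (1 + y) = 1 / ((k + 1 + y) * (k + 2 + y)) := by
    unfold gaussWeight
    field_simp
  have hfactor : |((k : ℝ) * (k + 1) - (1 + x) * (1 + y)) / ((k + 1 + x) * (k + 2 + x))| ≤ 1 := by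
    rw [abs_div, abs_of_pos hX, div_le_one hX, abs_le]
    constructor <;> nlinarith [mul_nonneg hk hx0.le, mul_nonneg hk hy0.le]
  rw [hsub, hdiv, abs_mul, abs_mul, abs_of_pos (one_div_pos.2 hY)]
  gcongr
  exact mul_le_of_le_one_right (abs_nonneg _) hfactor

lemma abs_gaussWeight_zero_sub_le {y : ℝ} (hx : 0 < x) (hy : 0 < y) :
    |gaussWeight 0 x - gaussWeight 0 y| ≤ |x - y| / 4 := by
  have hsub : gaussWeight 0 x - gaussWeight 0 y = (y - x) / ((2 + x) * (2 + y)) := by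
    unfold gaussWeight
    rw [Nat.cast_zero, zero_add, zero_add]
    field_simp
    ring
  rw [hsub, abs_div, abs_of_pos (by positivity : 0 < (2 + x) * (2 + y)), abs_sub_comm]
  gcongr
  nlinarith [mul_pos hx hy]

lemma gaussWeight_le_two_mul {y : ℝ} (k : ℕ) (hx : x ∈ Ioo (0 : ℝ) 1) (hy : y ∈ Ioo (0 : ℝ) 1) :
    gaussWeight k x ≤ 2 * gaussWeight k y := by
  have hpos := gaussWeight_pos k hy.1
  have hxy : |x - y| ≤ 1 := by rw [abs_le]; constructor <;> linarith [hx.1, hx.2, hy.1, hy.2]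
  have hdist : |x - y| * (gaussWeight k y / (1 + y)) ≤ 1 * gaussWeight k y :=
    mul_le_mul hxy (div_le_self hpos.le (by linarith [hy.1])) (by have := hy.1; positivity)
      zero_le_one
  linarith [le_abs_self (gaussWeight k x - gaussWeight k y), abs_gaussWeight_sub_le k hx hy]

lemma lipschitzOnWith_gaussBranch (k : ℕ) :
    LipschitzOnWith (1 / (k + 1) ^ 2) (gaussBranch k) (Ici 0) := by
  refine LipschitzOnWith.of_dist_le_mul fun x hx y hy => ?_
  rw [mem_Ici] at hx hy
  have hsub : gaussBranch k x - gaussBranch k y = (y - x) / ((k + 1 + x) * (k + 1 + y)) := by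
    have : (k : ℝ) + 1 + x ≠ 0 := by positivity
    have : (k : ℝ) + 1 + y ≠ 0 := by positivity
    unfold gaussBranch
    field_simp
    ring
  rw [Real.dist_eq, Real.dist_eq, hsub, abs_div, abs_sub_comm,
    abs_of_pos (by positivity : 0 < ((k : ℝ) + 1 + x) * (k + 1 + y)), div_eq_inv_mul]
  push_cast
  rw [one_div]
  gcongr
  nlinarith [mul_nonneg hx hy, k.cast_nonneg (α := ℝ)]

/-- Subtracting the constant `c` is free because the weights at `x` and at `y` have the same sum. -/
lemma abs_gaussTransfer_sub_le {y A : ℝ} {g : ℝ → ℝ} {a : ℕ → ℝ} (c : ℝ) (hx : 0 < x) (hy : 0 < y)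
    (hgx : Summable fun k => gaussWeight k x * g (gaussBranch k x))
    (hgy : Summable fun k => gaussWeight k y * g (gaussBranch k y)) (ha : HasSum a A)
    (hle : ∀ k, gaussWeight k x * |g (gaussBranch k x) - g (gaussBranch k y)| +
      |gaussWeight k x - gaussWeight k y| * |g (gaussBranch k y) - c| ≤ a k) :
    |gaussTransfer g x - gaussTransfer g y| ≤ A := by
  have hdiff := (hgx.hasSum.sub hgy.hasSum).sub
    (((hasSum_gaussWeight hx).sub (hasSum_gaussWeight hy)).mul_right c)
  rw [sub_self, zero_mul, sub_zero] at hdiff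
  rw [gaussTransfer, gaussTransfer, ← hdiff.tsum_eq, ← Real.norm_eq_abs]
  refine tsum_of_norm_bounded ha fun k => (hle k).trans' ?_
  rw [← abs_of_pos (gaussWeight_pos k hx), ← abs_mul, ← abs_mul,
    abs_of_pos (gaussWeight_pos k hx)]
  refine (abs_add_le _ _).trans_eq' (congrArg _ ?_)
  ring

section LipschitzOnBranches

variable {f : ℝ → ℝ} {D : ℝ≥0}

lemma gaussWeight_mul_abs_le (hf : Integrable f gaussMeasure)
    (hD : ∀ k, LipschitzOnWith D (f ∘ gaussBranch k) (Ioo 0 1)) (hx : x ∈ Ioo (0 : ℝ) 1) (k : ℕ) :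
    gaussWeight k x * |f (gaussBranch k x)| ≤
      2 * (∫ y, gaussWeight k y * |f (gaussBranch k y)| ∂gaussMeasure) + D * gaussWeight k x := by
  have hint := (integrable_gaussWeight_mul hf.abs k).const_mul 2
  have hpointwise : ∀ᵐ y ∂gaussMeasure, gaussWeight k x * |f (gaussBranch k x)| ≤
      2 * (gaussWeight k y * |f (gaussBranch k y)|) + D * gaussWeight k x := by
    filter_upwards [ae_mem_Ioo_gaussMeasure] with y hy
    have hlip : |f (gaussBranch k x) - f (gaussBranch k y)| ≤ D := by
      refine ((hD k).dist_le_mul x hx y hy).trans (mul_le_of_le_one_right D.2 ?_)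
      rw [Real.dist_eq, abs_le]
      constructor <;> linarith [hx.1, hx.2, hy.1, hy.2]
    have htri : |f (gaussBranch k x)| ≤ D + |f (gaussBranch k y)| := by
      linarith [abs_sub_abs_le_abs_sub (f (gaussBranch k x)) (f (gaussBranch k y))]
    have hwx := gaussWeight_pos k hx.1
    calc gaussWeight k x * |f (gaussBranch k x)|
        ≤ gaussWeight k x * (D + |f (gaussBranch k y)|) := by gcongr
      _ = gaussWeight k x * |f (gaussBranch k y)| + D * gaussWeight k x := by ring
      _ ≤ 2 * gaussWeight k y * |f (gaussBranch k y)| + D * gaussWeight k x := by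
        gcongr
        exact gaussWeight_le_two_mul k hx hy
      _ = _ := by ring
  have hmono := integral_mono_ae (integrable_const _) (hint.add (integrable_const _)) hpointwise
  simpa [integral_add hint (integrable_const _), integral_const_mul] using hmono

lemma hasSum_gaussWeight_bound (hf : Integrable f gaussMeasure) (hx : 0 < x) (D : ℝ) :
    HasSum (fun k => 2 * (∫ y, gaussWeight k y * |f (gaussBranch k y)| ∂gaussMeasure) +
      D * gaussWeight k x) (2 * (∫ y, |f y| ∂gaussMeasure) + D) := by
  simpa using ((hasSum_integral_gaussWeight_mul hf.abs).mul_left 2).add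
    ((hasSum_gaussWeight hx).mul_left D)

lemma summable_gaussWeight_mul (hf : Integrable f gaussMeasure)
    (hD : ∀ k, LipschitzOnWith D (f ∘ gaussBranch k) (Ioo 0 1)) (hx : x ∈ Ioo (0 : ℝ) 1) :
    Summable fun k => gaussWeight k x * f (gaussBranch k x) := by
  refine Summable.of_norm_bounded (hasSum_gaussWeight_bound hf hx.1 D).summable fun k => ?_
  rw [norm_mul, Real.norm_of_nonneg (gaussWeight_pos k hx.1).le]
  exact gaussWeight_mul_abs_le hf hD hx k

lemma lipschitzOnWith_gaussTransfer (hf : Integrable f gaussMeasure)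
    (hD : ∀ k, LipschitzOnWith D (f ∘ gaussBranch k) (Ioo 0 1)) :
    LipschitzOnWith (2 * ((∫ x, |f x| ∂gaussMeasure) + D)).toNNReal (gaussTransfer f)
      (Ioo 0 1) := by
  refine LipschitzOnWith.of_dist_le' fun x hx y hy => ?_
  have hsum := ((hasSum_gaussWeight_bound hf hy.1 D).add
    ((hasSum_gaussWeight hx.1).mul_left (D : ℝ))).mul_left |x - y|
  rw [Real.dist_eq, Real.dist_eq]
  refine (abs_gaussTransfer_sub_le 0 hx.1 hy.1 (summable_gaussWeight_mul hf hD hx)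
    (summable_gaussWeight_mul hf hD hy) hsum fun k => ?_).trans_eq (by ring)
  have hosc : |f (gaussBranch k x) - f (gaussBranch k y)| ≤ D * |x - y| :=
    (hD k).dist_le_mul x hx y hy
  have hwx := gaussWeight_pos k hx.1
  have hwy := gaussWeight_pos k hy.1
  have hy0 := hy.1
  calc gaussWeight k x * |f (gaussBranch k x) - f (gaussBranch k y)| +
        |gaussWeight k x - gaussWeight k y| * |f (gaussBranch k y) - 0|
      ≤ gaussWeight k x * (D * |x - y|) +
        |x - y| * gaussWeight k y * |f (gaussBranch k y)| := by
        rw [sub_zero]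
        gcongr
        refine (abs_gaussWeight_sub_le k hx hy).trans ?_
        gcongr
        exact div_le_self hwy.le (by linarith)
    _ = |x - y| * (gaussWeight k y * |f (gaussBranch k y)| + D * gaussWeight k x) := by ring
    _ ≤ _ := by gcongr; exact gaussWeight_mul_abs_le hf hD hy k

end LipschitzOnBranches

section Mixing

variable {h : ℝ → ℝ} {L : ℝ≥0}

lemma dist_le_of_lipschitzOnWith_Ioo {y : ℝ} (hh : LipschitzOnWith L h (Ioo 0 1))
    (hx : x ∈ Ioo (0 : ℝ) 1) (hy : y ∈ Ioo (0 : ℝ) 1) : |h x - h y| ≤ L := by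
  refine (hh.dist_le_mul x hx y hy).trans (mul_le_of_le_one_right L.2 ?_)
  rw [Real.dist_eq, abs_le]
  constructor <;> linarith [hx.1, hx.2, hy.1, hy.2]

lemma aestronglyMeasurable_of_lipschitzOnWith_Ioo (hh : LipschitzOnWith L h (Ioo 0 1)) :
    AEStronglyMeasurable h gaussMeasure :=
  (hh.continuousOn.aestronglyMeasurable measurableSet_Ioo).mono_ac
    (withDensity_absolutelyContinuous _ _)

lemma exists_bound_of_lipschitzOnWith_Ioo (hh : LipschitzOnWith L h (Ioo 0 1)) :
    ∃ C, ∀ᵐ x ∂gaussMeasure, ‖h x‖ ≤ C := by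
  refine ⟨L + |h (1 / 2)|, ?_⟩
  filter_upwards [ae_mem_Ioo_gaussMeasure] with x hx
  have hosc := dist_le_of_lipschitzOnWith_Ioo hh hx
    (by norm_num : (1 / 2 : ℝ) ∈ Ioo (0 : ℝ) 1)
  rw [Real.norm_eq_abs]
  linarith [abs_sub_abs_le_abs_sub (h x) (h (1 / 2))]

lemma integrable_of_lipschitzOnWith_Ioo (hh : LipschitzOnWith L h (Ioo 0 1)) :
    Integrable h gaussMeasure :=
  let ⟨C, hC⟩ := exists_bound_of_lipschitzOnWith_Ioo hh
  .of_bound (aestronglyMeasurable_of_lipschitzOnWith_Ioo hh) C hC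

lemma abs_sub_integral_le_of_lipschitzOnWith_Ioo (hh : LipschitzOnWith L h (Ioo 0 1))
    (hx : x ∈ Ioo (0 : ℝ) 1) : |h x - ∫ y, h y ∂gaussMeasure| ≤ L := by
  have hosc : ∀ᵐ y ∂gaussMeasure, ‖h x - h y‖ ≤ L := by
    filter_upwards [ae_mem_Ioo_gaussMeasure] with y hy
    exact dist_le_of_lipschitzOnWith_Ioo hh hx hy
  simpa [integral_sub (integrable_const _) (integrable_of_lipschitzOnWith_Ioo hh)] using
    norm_integral_le_of_norm_le_const hosc

lemma lipschitzOnWith_comp_gaussBranch (hh : LipschitzOnWith L h (Ioo 0 1)) (k : ℕ) :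
    LipschitzOnWith (L * (1 / (k + 1) ^ 2)) (h ∘ gaussBranch k) (Ioo 0 1) :=
  hh.comp ((lipschitzOnWith_gaussBranch k).mono fun _ hx => hx.1.le)
    fun _ hx => gaussBranch_mem_Ioo k hx.1

lemma summable_gaussWeight_mul_of_lipschitzOnWith_Ioo (hh : LipschitzOnWith L h (Ioo 0 1))
    (hx : x ∈ Ioo (0 : ℝ) 1) : Summable fun k => gaussWeight k x * h (gaussBranch k x) := by
  refine summable_gaussWeight_mul (D := L) (integrable_of_lipschitzOnWith_Ioo hh) (fun k => ?_) hx
  refine (lipschitzOnWith_comp_gaussBranch hh k).weaken (mul_le_of_le_one_right' ?_)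
  exact div_le_one_of_le₀ (one_le_pow₀ (by simp)) (by positivity)

lemma abs_sub_quarter_le {c : ℝ} (hh : LipschitzOnWith L h (Ioo 0 1)) (hx : x ∈ Ioo (0 : ℝ) 1)
    (hc : |x - 1 / 4| ≤ c) : |h x - h (1 / 4)| ≤ L * c :=
  (hh.dist_le_mul x hx (1 / 4) (by norm_num)).trans (by rw [Real.dist_eq]; gcongr)

lemma gaussTransfer_zeroth_term_le {y : ℝ} (hh : LipschitzOnWith L h (Ioo 0 1))
    (hx : x ∈ Ioo (0 : ℝ) 1) (hy : y ∈ Ioo (0 : ℝ) 1) :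
    gaussWeight 0 x * |h (gaussBranch 0 x) - h (gaussBranch 0 y)| +
      |gaussWeight 0 x - gaussWeight 0 y| * |h (gaussBranch 0 y) - h (1 / 4)| ≤
    L * |x - y| * (gaussWeight 0 x + 3 / 16) := by
  have hwx := gaussWeight_pos 0 hx.1
  have hmem := gaussBranch_mem_Ioo 0 hy.1
  have hosc : |h (gaussBranch 0 x) - h (gaussBranch 0 y)| ≤ L * |x - y| := by
    simpa [Real.dist_eq] using (lipschitzOnWith_comp_gaussBranch hh 0).dist_le_mul x hx y hy
  have hcenter := abs_sub_quarter_le hh hmem (c := 3 / 4) <| by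
    rw [abs_le]; constructor <;> linarith [hmem.1, hmem.2]
  calc _ ≤ gaussWeight 0 x * (L * |x - y|) + |x - y| / 4 * (L * (3 / 4)) := by
        gcongr
        exact abs_gaussWeight_zero_sub_le hx.1 hy.1
    _ = _ := by ring

lemma gaussTransfer_succ_term_le {y : ℝ} (hh : LipschitzOnWith L h (Ioo 0 1))
    (hx : x ∈ Ioo (0 : ℝ) 1) (hy : y ∈ Ioo (0 : ℝ) 1) {k : ℕ} (hk : 1 ≤ k) :
    gaussWeight k x * |h (gaussBranch k x) - h (gaussBranch k y)| +
      |gaussWeight k x - gaussWeight k y| * |h (gaussBranch k y) - h (1 / 4)| ≤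
    L * |x - y| * (gaussWeight k x / 4 + gaussWeight k y / (1 + y) / 4) := by
  have hwx := gaussWeight_pos k hx.1
  have hwy := gaussWeight_pos k hy.1
  have hy0 := hy.1
  have hmem := gaussBranch_mem_Ioo k hy.1
  have hk' : (1 : ℝ) ≤ k := by exact_mod_cast hk
  have hhalf : gaussBranch k y ≤ 1 / 2 := one_div_le_one_div_of_le two_pos (by linarith)
  have hrate : (1 : ℝ) / (k + 1) ^ 2 ≤ 1 / 4 :=
    one_div_le_one_div_of_le four_pos (by nlinarith)
  have hosc : |h (gaussBranch k x) - h (gaussBranch k y)| ≤ L * (1 / 4) * |x - y| := by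
    refine ((lipschitzOnWith_comp_gaussBranch hh k).dist_le_mul x hx y hy).trans ?_
    push_cast
    rw [Real.dist_eq]
    gcongr
  have hcenter := abs_sub_quarter_le hh hmem (c := 1 / 4) <| by
    rw [abs_le]; constructor <;> linarith [hmem.1]
  calc _ ≤ gaussWeight k x * (L * (1 / 4) * |x - y|) +
        |x - y| * (gaussWeight k y / (1 + y)) * (L * (1 / 4)) := by
        gcongr
        exact abs_gaussWeight_sub_le k hx hy
    _ = _ := by ring

lemma gaussTransfer_rate_le {y : ℝ} (hx : 0 < x) (hy : 0 < y) :
    1 / 4 + 1 / (1 + y) / 4 +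
      (3 / 4 * gaussWeight 0 x + 3 / 16 - gaussWeight 0 y / (1 + y) / 4) ≤ 15 / 16 := by
  have hwx : gaussWeight 0 x = 1 / (2 + x) := by
    rw [gaussWeight, Nat.cast_zero, zero_add, zero_add]; field_simp
  have hwy : 1 / (1 + y) / 4 - gaussWeight 0 y / (1 + y) / 4 = 1 / (2 + y) / 4 := by
    rw [gaussWeight, Nat.cast_zero, zero_add, zero_add]; field_simp; ring
  have := one_div_le_one_div_of_le two_pos (by linarith : 2 ≤ 2 + x)
  have := one_div_le_one_div_of_le two_pos (by linarith : 2 ≤ 2 + y)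
  linarith

lemma lipschitzOnWith_gaussTransfer_of_lipschitzOnWith (hh : LipschitzOnWith L h (Ioo 0 1)) :
    LipschitzOnWith (15 / 16 * L) (gaussTransfer h) (Ioo 0 1) := by
  refine LipschitzOnWith.of_dist_le_mul fun x hx y hy => ?_
  have hsum := ((((hasSum_gaussWeight hx.1).div_const 4).add
    (((hasSum_gaussWeight hy.1).div_const (1 + y)).div_const 4)).add (hasSum_pi_single 0
    (3 / 4 * gaussWeight 0 x + 3 / 16 - gaussWeight 0 y / (1 + y) / 4))).mul_left (L * |x - y|)
  -- The reference value `h (1 / 4)` is within `3 L / 4` of `h` on the zeroth branch, where the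
  -- weight varies slowly, and within `L / 4` on the other branches.
  refine (abs_gaussTransfer_sub_le (h (1 / 4)) hx.1 hy.1
    (summable_gaussWeight_mul_of_lipschitzOnWith_Ioo hh hx)
    (summable_gaussWeight_mul_of_lipschitzOnWith_Ioo hh hy) hsum fun k => ?_).trans ?_
  · rcases k.eq_zero_or_pos with rfl | hk
    · refine (gaussTransfer_zeroth_term_le hh hx hy).trans_eq ?_
      rw [Pi.single_eq_same]
      ring
    · rw [Pi.single_eq_of_ne hk.ne', add_zero]
      exact gaussTransfer_succ_term_le hh hx hy hk
  · calc _ ≤ L * |x - y| * (15 / 16) := by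
          gcongr
          exact gaussTransfer_rate_le hx.1 hy.1
      _ = _ := by rw [Real.dist_eq]; push_cast; ring

lemma integrable_comp_iterate_mul {f : ℝ → ℝ} (hf : Integrable f gaussMeasure)
    (hh : LipschitzOnWith L h (Ioo 0 1)) (j : ℕ) :
    Integrable (fun x => f (gaussMap^[j] x) * h x) gaussMeasure := by
  obtain ⟨C, hC⟩ := exists_bound_of_lipschitzOnWith_Ioo hh
  exact ((measurePreserving_gaussMap.iterate j).integrable_comp_of_integrable hf).mul_bdd
    (aestronglyMeasurable_of_lipschitzOnWith_Ioo hh) hC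

lemma abs_integral_comp_iterate_mul_sub_le {f : ℝ → ℝ} (hf : Integrable f gaussMeasure) (j : ℕ) :
    ∀ {L : ℝ≥0} {h : ℝ → ℝ}, LipschitzOnWith L h (Ioo 0 1) →
    |∫ x, f (gaussMap^[j] x) * h x ∂gaussMeasure -
      (∫ x, f x ∂gaussMeasure) * ∫ x, h x ∂gaussMeasure| ≤
      L * (15 / 16) ^ j * ∫ x, |f x| ∂gaussMeasure := by
  induction j with
  | zero =>
    intro L h hh
    have hint := integrable_comp_iterate_mul hf hh 0
    simp only [Function.iterate_zero, id] at hint ⊢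
    rw [← integral_mul_const, ← integral_sub hint (hf.mul_const _), pow_zero, mul_one,
      ← integral_const_mul]
    refine norm_integral_le_of_norm_le (G := ℝ) (hf.abs.const_mul _) ?_
    filter_upwards [ae_mem_Ioo_gaussMeasure] with x hx
    rw [← mul_sub, norm_mul, mul_comm]
    exact mul_le_mul_of_nonneg_right (abs_sub_integral_le_of_lipschitzOnWith_Ioo hh hx)
      (norm_nonneg _)
  | succ j ih =>
    intro L h hh
    have hdual := integral_comp_gaussMap_mul (φ := f ∘ gaussMap^[j])
      (integrable_comp_iterate_mul hf hh (j + 1))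
    have hPh := ih (lipschitzOnWith_gaussTransfer_of_lipschitzOnWith hh)
    rw [integral_gaussTransfer (integrable_of_lipschitzOnWith_Ioo hh)] at hPh
    refine (le_of_eq_of_le ?_ hPh).trans_eq ?_
    · exact congrArg (|· - _|) hdual
    · push_cast
      ring

lemma variance_birkhoffSum_gaussMap_le {f : ℝ → ℝ} {D : ℝ≥0} (hf : MemLp f 2 gaussMeasure)
    (hD : ∀ k, LipschitzOnWith D (f ∘ gaussBranch k) (Ioo 0 1)) (m : ℕ) :
    Var[birkhoffSum gaussMap f m; gaussMeasure] ≤ m * (Var[f; gaussMeasure] +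
      64 * ((∫ x, |f x| ∂gaussMeasure) + D) * ∫ x, |f x| ∂gaussMeasure) := by
  have hint := hf.integrable one_le_two
  set I := ∫ x, |f x| ∂gaussMeasure
  have : 0 ≤ I := integral_nonneg fun x => abs_nonneg _
  have hcov (j : ℕ) : cov[f, f ∘ gaussMap^[j + 1]; gaussMeasure] ≤
      2 * (I + D) * I * (15 / 16) ^ j := by
    have hiter := measurePreserving_gaussMap.iterate (j + 1)
    have hmem : MemLp (f ∘ gaussMap^[j + 1]) 2 gaussMeasure := hf.comp_measurePreserving hiter
    have hdual : ∫ x, (f ∘ gaussMap^[j + 1] * f) x ∂gaussMeasure =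
        ∫ x, f (gaussMap^[j] x) * gaussTransfer f x ∂gaussMeasure :=
      integral_comp_gaussMap_mul (φ := f ∘ gaussMap^[j]) (hmem.integrable_mul hf)
    have hmean : ∫ x, (f ∘ gaussMap^[j + 1]) x ∂gaussMeasure = ∫ x, f x ∂gaussMeasure :=
      integral_comp_iterate hf.1 measurePreserving_gaussMap (j + 1)
    have hdecay := abs_integral_comp_iterate_mul_sub_le hint j
      (lipschitzOnWith_gaussTransfer hint hD)
    rw [integral_gaussTransfer hint, Real.coe_toNNReal _ (by positivity)] at hdecay
    rw [covariance_eq_sub hf hmem, hmean, mul_comm f, hdual]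
    exact (le_of_abs_le hdecay).trans_eq (mul_right_comm _ _ _)
  refine (variance_birkhoffSum_le (B := 16 * (2 * (I + D) * I)) measurePreserving_gaussMap hf hcov
    (fun n => ?_) m).trans_eq (by ring)
  have hgeom := (summable_geometric_of_lt_one (by norm_num) (by norm_num)).sum_le_tsum
    (Finset.range n) fun j _ => (by positivity : (0 : ℝ) ≤ (15 / 16) ^ j)
  rw [tsum_geometric_of_lt_one (by norm_num) (by norm_num)] at hgeom
  rw [← Finset.mul_sum, mul_comm]
  gcongr
  exact hgeom.trans (by norm_num)

lemma tendsto_birkhoffSum_gaussMap_div {f : ℕ → ℝ → ℝ} {D : ℝ≥0} {b : ℕ → ℝ} {a : ℝ}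
    (hf : ∀ m, MemLp (f m) 2 gaussMeasure)
    (hD : ∀ m k, LipschitzOnWith D (f m ∘ gaussBranch k) (Ioo 0 1))
    (hmean : Tendsto (fun m => m * (∫ x, f m x ∂gaussMeasure) / b m) atTop (𝓝 a))
    (hvar : Tendsto (fun m => m * (Var[f m; gaussMeasure] +
      64 * ((∫ x, |f m x| ∂gaussMeasure) + D) * ∫ x, |f m x| ∂gaussMeasure) / b m ^ 2)
      atTop (𝓝 0)) :
    Tendsto (fun z : ℕ × ℝ => birkhoffSum gaussMap (f z.1) z.1 z.2 / b z.1)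
      (inMeasure atTop gaussMeasure) (𝓝 a) := by
  have hsum (m : ℕ) := memLp_birkhoffSum (hf m) measurePreserving_gaussMap m
  simp only [div_eq_mul_inv]
  refine tendsto_inMeasure_of_tendsto_variance
    (X := fun m x => birkhoffSum gaussMap (f m) m x * (b m)⁻¹) (fun m => (hsum m).mul_const _) ?_ ?_
  · simpa only [integral_mul_const, div_eq_mul_inv, integral_birkhoffSum
      ((hf _).integrable one_le_two) measurePreserving_gaussMap] using hmean
  · refine squeeze_zero (fun m => variance_nonneg _ _) (fun m => ?_) hvar
    rw [variance_mul_const, inv_pow, ← div_eq_mul_inv]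
    gcongr
    exact variance_birkhoffSum_gaussMap_le (hf m) (hD m) m

end Mixing

end GaussMap

section Levy

variable {x : ℝ}

lemma abs_log_le_four_mul_rpow (hx : x ∈ Ioo (0 : ℝ) 1) :
    |Real.log x| ≤ 4 * x ^ (-(1 / 4) : ℝ) := by
  have h := Real.abs_log_mul_self_rpow_lt x (1 / 4) hx.1 hx.2.le (by norm_num)
  have hpow : 0 < x ^ (1 / 4 : ℝ) := Real.rpow_pos_of_pos hx.1 _
  rw [abs_mul, abs_of_pos hpow, one_div_one_div, ← lt_div_iff₀ hpow] at h
  rw [Real.rpow_neg hx.1.le, ← div_eq_mul_inv]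
  exact h.le

lemma memLp_log_gaussMeasure : MemLp Real.log 2 gaussMeasure := by
  have hsq : IntegrableOn (fun x : ℝ => 16 * x ^ (-(1 / 2) : ℝ)) (Ioo 0 1) :=
    ((intervalIntegral.integrableOn_Ioo_rpow_iff one_pos).2 (by norm_num)).const_mul 16
  refine MemLp.of_measure_le_smul ENNReal.ofReal_ne_top gaussMeasure_le_smul_volume
    ((memLp_two_iff_integrable_sq Real.measurable_log.aestronglyMeasurable).2
      (hsq.mono' (by fun_prop) ?_))
  filter_upwards [ae_restrict_mem measurableSet_Ioo] with x hx
  have h := pow_le_pow_left₀ (abs_nonneg _) (abs_log_le_four_mul_rpow hx) 2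
  rw [mul_pow, ← Real.rpow_natCast (x ^ _), ← Real.rpow_mul hx.1.le] at h
  rw [Real.norm_eq_abs, abs_pow]
  norm_num at h ⊢
  exact h

lemma hasSum_neg_one_pow_div_add_one_sq :
    HasSum (fun n : ℕ => (-1) ^ n / (n + 1 : ℝ) ^ 2) (Real.pi ^ 2 / 12) := by
  have h := hasSum_one_div_nat_pow_mul_cos one_ne_zero (x := 1 / 2) (by norm_num [mem_Icc])
  rw [← hasSum_nat_add_iff' 1] at h
  have hB := bernoulliFun_two (1 / 2)
  rw [bernoulliFun] at hB
  rw [mul_one, hB] at h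
  convert! h.neg using 1
  · ext n
    have hcos : Real.cos (2 * Real.pi * (n + 1 : ℕ) * (1 / 2)) = (-1) ^ (n + 1) := by
      rw [← Real.cos_nat_mul_pi]; ring_nf
    rw [hcos]
    push_cast
    ring
  · norm_num
    ring

lemma intervalIntegrable_pow_mul_log (n : ℕ) :
    IntervalIntegrable (fun x : ℝ => x ^ n * Real.log x) volume 0 1 :=
  intervalIntegral.intervalIntegrable_log'.continuousOn_mul (by fun_prop)

lemma integral_pow_mul_log (n : ℕ) :
    ∫ x in (0 : ℝ)..1, x ^ n * Real.log x = -1 / (n + 1 : ℝ) ^ 2 := by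
  have hderiv (x : ℝ) (hx : x ∈ Ioo (0 : ℝ) 1) : HasDerivAt
      (fun x : ℝ => x ^ (n + 1) * Real.log x / (n + 1) - x ^ (n + 1) / (n + 1 : ℝ) ^ 2)
      (x ^ n * Real.log x) x := by
    have hx0 := hx.1.ne'
    refine ((((hasDerivAt_pow (n + 1) x).mul (Real.hasDerivAt_log hx0)).div_const
      (n + 1 : ℝ)).sub ((hasDerivAt_pow (n + 1) x).div_const ((n + 1 : ℝ) ^ 2))).congr_deriv ?_
    push_cast
    field_simp
    ring
  have hcont : Continuous
      fun x : ℝ => x ^ (n + 1) * Real.log x / (n + 1) - x ^ (n + 1) / (n + 1 : ℝ) ^ 2 := by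
    simp only [pow_succ, mul_assoc]
    have := Real.continuous_mul_log
    fun_prop
  rw [intervalIntegral.integral_eq_sub_of_hasDerivAt_of_le zero_le_one hcont.continuousOn hderiv
    (intervalIntegrable_pow_mul_log n)]
  simp [neg_div]

lemma integral_log_div_one_add :
    ∫ x in Ioo (0 : ℝ) 1, Real.log x / (1 + x) = -(Real.pi ^ 2 / 12) := by
  have hmoment (n : ℕ) : ∫ x in Ioo (0 : ℝ) 1, x ^ n * Real.log x = -1 / (n + 1 : ℝ) ^ 2 := by
    rw [← integral_Ioc_eq_integral_Ioo, ← intervalIntegral.integral_of_le zero_le_one,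
      integral_pow_mul_log]
  have hint (n : ℕ) : IntegrableOn (fun x : ℝ => (-1) ^ n * (x ^ n * Real.log x)) (Ioo 0 1) :=
    (((intervalIntegrable_iff_integrableOn_Ioo_of_le zero_le_one).1
      (intervalIntegrable_pow_mul_log n))).const_mul _
  have hnorm (n : ℕ) : ∫ x in Ioo (0 : ℝ) 1, ‖(-1) ^ n * (x ^ n * Real.log x)‖ =
      1 / (n + 1 : ℝ) ^ 2 := by
    rw [setIntegral_congr_fun (g := fun x => -(x ^ n * Real.log x)) measurableSet_Ioo
      fun x hx => ?_, integral_neg, hmoment, neg_div, neg_neg]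
    simp [abs_of_pos hx.1, abs_of_neg (Real.log_neg hx.1 hx.2)]
  have hsummable : Summable fun n : ℕ => 1 / (n + 1 : ℝ) ^ 2 := by
    exact_mod_cast (summable_nat_add_iff 1).2 (Real.summable_one_div_nat_pow.2 one_lt_two)
  have hseries := hasSum_integral_of_summable_integral_norm hint (by simpa only [hnorm])
  simp only [integral_const_mul, hmoment] at hseries
  refine (setIntegral_congr_fun measurableSet_Ioo fun x hx => ?_).trans
    (hseries.unique (hasSum_neg_one_pow_div_add_one_sq.neg.congr_fun fun n => by ring))
  have hgeom := (hasSum_geometric_of_abs_lt_one (r := -x)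
    (by rw [abs_neg, abs_of_pos hx.1]; exact hx.2)).mul_right (Real.log x)
  rw [sub_neg_eq_add, ← div_eq_inv_mul] at hgeom
  exact (hgeom.congr_fun fun n => by rw [neg_pow x, mul_assoc]).tsum_eq.symm

lemma integral_log_gaussMeasure :
    ∫ x, Real.log x ∂gaussMeasure = -(Real.pi ^ 2 / (12 * Real.log 2)) := by
  rw [gaussMeasure, integral_withDensity_eq_integral_toReal_smul
    measurable_gaussDensity.ennreal_ofReal (by simp),
    setIntegral_congr_fun (g := fun x => (Real.log 2)⁻¹ * (Real.log x / (1 + x)))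
      measurableSet_Ioo fun x hx => ?_, integral_const_mul, integral_log_div_one_add]
  · field_simp
  · simp only [smul_eq_mul]
    rw [ENNReal.toReal_ofReal (gaussDensity_pos hx.1).le, gaussDensity]
    field_simp

lemma lipschitzOnWith_log_Ioi_one : LipschitzOnWith 1 Real.log (Ioi 1) := by
  refine (convex_Ioi 1).lipschitzOnWith_of_nnnorm_hasDerivWithin_le
    (fun x hx => (Real.hasDerivAt_log (one_pos.trans hx).ne').hasDerivWithinAt) fun x hx => ?_
  rw [← NNReal.coe_le_coe, coe_nnnorm, norm_inv, NNReal.coe_one]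
  exact inv_le_one_of_one_le₀ ((mem_Ioi.1 hx).le.trans (le_abs_self x))

lemma lipschitzOnWith_log_comp_gaussBranch (k : ℕ) :
    LipschitzOnWith 1 (Real.log ∘ gaussBranch k) (Ioo 0 1) := by
  refine LipschitzOnWith.of_dist_le_mul fun x hx y hy => ?_
  have hmem {z : ℝ} (hz : z ∈ Ioo (0 : ℝ) 1) : (k + 1 + z : ℝ) ∈ Ioi 1 := by
    rw [mem_Ioi]
    linarith [hz.1, k.cast_nonneg (α := ℝ)]
  simpa [gaussBranch] using lipschitzOnWith_log_Ioi_one.dist_le_mul _ (hmem hx) _ (hmem hy)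

lemma tendsto_birkhoffSum_log_div :
    Tendsto (fun z : ℕ × ℝ => birkhoffSum gaussMap Real.log z.1 z.2 / z.1)
      (inMeasure atTop gaussMeasure) (𝓝 (-(Real.pi ^ 2 / (12 * Real.log 2)))) := by
  refine tendsto_birkhoffSum_gaussMap_div (f := fun _ => Real.log) (b := Nat.cast) (D := 1)
    (fun _ => memLp_log_gaussMeasure) (fun _ => lipschitzOnWith_log_comp_gaussBranch) ?_ ?_
  · rw [← integral_log_gaussMeasure]
    refine tendsto_const_nhds.congr' ?_
    filter_upwards [eventually_ne_atTop 0] with m hm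
    rw [mul_div_cancel_left₀ _ (Nat.cast_ne_zero.2 hm)]
  · suffices h : ∀ C : ℝ, Tendsto (fun m : ℕ => m * C / (m : ℝ) ^ 2) atTop (𝓝 0) from h _
    refine fun C => (tendsto_const_div_atTop_nhds_zero_nat C).congr' ?_
    filter_upwards [eventually_ne_atTop 0] with m hm
    rw [pow_two, mul_div_mul_left _ _ (Nat.cast_ne_zero.2 hm)]

end Levy

section Khinchin

variable {x : ℝ}

/-- The first partial quotient of `x` truncated at `N`, which replaces the non-integrable first
partial quotient in the weak law of large numbers. -/
def truncatedDigit (N : ℕ) (x : ℝ) : ℝ := (min ⌊1 / x⌋₊ N : ℕ)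

lemma truncatedDigit_nonneg (N : ℕ) (x : ℝ) : 0 ≤ truncatedDigit N x := Nat.cast_nonneg _

lemma truncatedDigit_le (N : ℕ) (x : ℝ) : truncatedDigit N x ≤ N :=
  Nat.cast_le.2 (min_le_right _ _)

lemma memLp_truncatedDigit (N : ℕ) : MemLp (truncatedDigit N) 2 gaussMeasure := by
  have hmeas : Measurable (truncatedDigit N) := by unfold truncatedDigit; fun_prop
  refine .of_bound hmeas.aestronglyMeasurable N (ae_of_all _ fun x => ?_)
  rw [Real.norm_of_nonneg (truncatedDigit_nonneg N x)]
  exact truncatedDigit_le N x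

lemma lipschitzOnWith_truncatedDigit_comp_gaussBranch (N k : ℕ) :
    LipschitzOnWith 0 (truncatedDigit N ∘ gaussBranch k) (Ioo 0 1) := by
  refine LipschitzOnWith.of_dist_le_mul fun x hx y hy => ?_
  rw [Function.comp_apply, Function.comp_apply, truncatedDigit, truncatedDigit,
    natFloor_one_div_gaussBranch k (Ioo_subset_Ico_self hx),
    natFloor_one_div_gaussBranch k (Ioo_subset_Ico_self hy), dist_self]
  positivity

lemma lt_natFloor_one_div_iff (k : ℕ) (hx : 0 < x) :
    k < ⌊1 / x⌋₊ ↔ x ∈ Ioc (0 : ℝ) (1 / (k + 1)) := by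
  rw [← Nat.succ_le_iff, Nat.le_floor_iff (by positivity), le_one_div (by positivity) hx, mem_Ioc,
    Nat.cast_succ, and_iff_right hx]

lemma truncatedDigit_eq_sum_indicator (N : ℕ) (hx : 0 < x) :
    truncatedDigit N x = ∑ k ∈ Finset.range N, (Ioc (0 : ℝ) (1 / (k + 1))).indicator 1 x := by
  have hfilter : {k ∈ Finset.range N | k < ⌊1 / x⌋₊} = Finset.range (min ⌊1 / x⌋₊ N) := by
    ext k; simp [and_comm]
  classical
  simp only [indicator_apply, ← lt_natFloor_one_div_iff _ hx, Pi.one_apply, Finset.sum_boole,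
    hfilter, Finset.card_range, truncatedDigit]

lemma gaussMeasure_natFloor_one_div_gt (k : ℕ) : gaussMeasure {x | k < ⌊1 / x⌋₊} =
    ENNReal.ofReal (Real.log (1 + 1 / (k + 1)) / Real.log 2) := by
  rw [← gaussMeasure_Ioc ⟨by positivity, by
    rw [div_le_one (by positivity)]; linarith [k.cast_nonneg (α := ℝ)]⟩]
  refine measure_congr ?_
  filter_upwards [ae_mem_Ioo_gaussMeasure] with x hx
  exact propext (lt_natFloor_one_div_iff k hx.1)

lemma integral_truncatedDigit (N : ℕ) :
    ∫ x, truncatedDigit N x ∂gaussMeasure = Real.log (N + 1) / Real.log 2 := by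
  have hterm (k : ℕ) : ∫ x, (Ioc (0 : ℝ) (1 / (k + 1))).indicator 1 x ∂gaussMeasure =
      (Real.log ((k + 1 : ℕ) + 1) - Real.log (k + 1)) / Real.log 2 := by
    have hk : 0 < (k : ℝ) + 1 := by positivity
    rw [integral_indicator_one measurableSet_Ioc, measureReal_def,
      gaussMeasure_Ioc ⟨by positivity, (div_le_one hk).2 (by linarith)⟩, ENNReal.toReal_ofReal
      (div_nonneg (Real.log_nonneg (le_add_of_nonneg_right (by positivity))) log_two_pos.le),
      ← Real.log_div (by positivity) hk.ne', one_add_div hk.ne', Nat.cast_succ]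
  have hint (k : ℕ) : Integrable ((Ioc (0 : ℝ) (1 / (k + 1))).indicator 1 : ℝ → ℝ) gaussMeasure :=
    (integrable_const (1 : ℝ)).indicator measurableSet_Ioc
  rw [integral_congr_ae (ae_mem_Ioo_gaussMeasure.mono fun x hx =>
      truncatedDigit_eq_sum_indicator N hx.1), integral_finsetSum _ fun k _ => hint k,
    Finset.sum_congr rfl fun k _ => hterm k, ← Finset.sum_div,
    Finset.sum_range_sub fun k : ℕ => Real.log (k + 1)]
  simp

lemma variance_truncatedDigit_le (N : ℕ) : Var[truncatedDigit N; gaussMeasure] ≤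
    N * ∫ x, truncatedDigit N x ∂gaussMeasure := by
  have hmem := memLp_truncatedDigit N
  rw [← integral_const_mul]
  refine (variance_le_expectation_sq hmem.1).trans
    (integral_mono hmem.integrable_sq ((hmem.integrable one_le_two).const_mul _) fun x => ?_)
  rw [Pi.pow_apply, pow_two]
  exact mul_le_mul_of_nonneg_right (truncatedDigit_le N x) (truncatedDigit_nonneg N x)

/-- The level `⌊m √(log m)⌋` at which the first `m` partial quotients are truncated: of larger
order than `m`, so that with high probability none of them is affected, and of smaller order than
`m log m`, so that the variance of the truncated sum is negligible. -/
def truncationLevel (m : ℕ) : ℕ := ⌊m * √(Real.log m)⌋₊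

lemma tendsto_log_natCast_atTop : Tendsto (fun m : ℕ => Real.log m) atTop atTop :=
  Real.tendsto_log_atTop.comp tendsto_natCast_atTop_atTop

lemma tendsto_log_log_div_log :
    Tendsto (fun n : ℕ => Real.log (Real.log n) / Real.log n) atTop (𝓝 0) :=
  Real.isLittleO_log_id_atTop.tendsto_div_nhds_zero.comp tendsto_log_natCast_atTop

lemma tendsto_inv_sqrt_log_natCast : Tendsto (fun m : ℕ => (√(Real.log m))⁻¹) atTop (𝓝 0) :=
  (Real.tendsto_sqrt_atTop.comp tendsto_log_natCast_atTop).inv_tendsto_atTop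

lemma tendsto_truncationLevel_div :
    Tendsto (fun m : ℕ => truncationLevel m / (m * Real.log m)) atTop (𝓝 0) := by
  refine squeeze_zero (fun m => by positivity) (fun m => ?_) tendsto_inv_sqrt_log_natCast
  rcases (Real.log_natCast_nonneg m).eq_or_lt' with hlog | hlog
  · simp [hlog]
  have hm : (0 : ℝ) < m := lt_of_le_of_ne m.cast_nonneg fun h => by simp [← h] at hlog
  have := Real.sqrt_pos.2 hlog
  rw [div_le_iff₀ (by positivity)]
  refine (Nat.floor_le (by positivity)).trans_eq ?_
  field_simp
  rw [Real.sq_sqrt hlog.le]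

lemma tendsto_div_truncationLevel_add_one :
    Tendsto (fun m : ℕ => (m : ℝ) / (truncationLevel m + 1)) atTop (𝓝 0) := by
  refine squeeze_zero' (.of_forall fun m => by positivity) ?_ tendsto_inv_sqrt_log_natCast
  filter_upwards [tendsto_log_natCast_atTop.eventually_gt_atTop 0] with m hlog
  have hsqrt := Real.sqrt_pos.2 hlog
  rw [div_le_iff₀ (by positivity), ← div_eq_inv_mul, le_div_iff₀ hsqrt]
  exact (Nat.lt_floor_add_one _).le

lemma tendsto_log_truncationLevel_add_one_div :
    Tendsto (fun m : ℕ => Real.log (truncationLevel m + 1) / Real.log m) atTop (𝓝 1) := by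
  have hupper : Tendsto (fun m : ℕ => 1 + (Real.log 2 / Real.log m +
      Real.log (Real.log m) / Real.log m)) atTop (𝓝 1) := by
    simpa using ((tendsto_log_natCast_atTop.const_div_atTop (Real.log 2)).add
      tendsto_log_log_div_log).const_add 1
  refine tendsto_of_tendsto_of_tendsto_of_le_of_le' tendsto_const_nhds hupper ?_ ?_
  all_goals
    filter_upwards [tendsto_log_natCast_atTop.eventually_ge_atTop 1, eventually_ge_atTop 1]
      with m hlog hm
    have hm : (1 : ℝ) ≤ m := by exact_mod_cast hm
    have hlog0 : 0 < Real.log m := one_pos.trans_le hlog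
  · rw [one_le_div hlog0]
    refine Real.log_le_log (by positivity) ((le_mul_of_one_le_right (by positivity) ?_).trans
      (Nat.lt_floor_add_one _).le)
    exact Real.one_le_sqrt.2 hlog
  · rw [← add_div, one_add_div hlog0.ne', ← Real.log_mul two_ne_zero hlog0.ne',
      ← Real.log_mul (by positivity) (by positivity)]
    gcongr
    have hfloor : (truncationLevel m : ℝ) ≤ m * √(Real.log m) := Nat.floor_le (by positivity)
    have hsqrt : √(Real.log m) ≤ Real.log m := Real.sqrt_le_self_iff.2 (Or.inr hlog)
    nlinarith

lemma tendsto_birkhoffSum_truncatedDigit_div :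
    Tendsto (fun z : ℕ × ℝ => birkhoffSum gaussMap (truncatedDigit (truncationLevel z.1)) z.1 z.2 /
      (z.1 * Real.log z.1)) (inMeasure atTop gaussMeasure) (𝓝 (1 / Real.log 2)) := by
  set M : ℕ → ℝ := fun m => Real.log (truncationLevel m + 1) / Real.log 2
  have hM : Tendsto (fun m => M m / Real.log m) atTop (𝓝 (1 / Real.log 2)) := by
    simpa only [M, div_right_comm] using
      tendsto_log_truncationLevel_add_one_div.div_const (Real.log 2)
  refine tendsto_birkhoffSum_gaussMap_div (f := fun m => truncatedDigit (truncationLevel m))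
    (b := fun m => m * Real.log m) (D := 0) (fun m => memLp_truncatedDigit _)
    (fun m => lipschitzOnWith_truncatedDigit_comp_gaussBranch _) ?_ ?_
  · refine hM.congr' ?_
    filter_upwards [eventually_ne_atTop 0] with m hm
    rw [integral_truncatedDigit, mul_div_mul_left _ _ (Nat.cast_ne_zero.2 hm)]
  · have hbound : Tendsto (fun m : ℕ => truncationLevel m / (m * Real.log m) * (M m / Real.log m) +
        64 * (M m / Real.log m) ^ 2 / m) atTop (𝓝 0) := by
      simpa using (tendsto_truncationLevel_div.mul hM).add
        (((hM.pow 2).const_mul 64).div_atTop tendsto_natCast_atTop_atTop)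
    refine squeeze_zero' (.of_forall fun m => ?_) ?_ hbound
    · have := variance_nonneg (truncatedDigit (truncationLevel m)) gaussMeasure
      positivity
    · filter_upwards [eventually_gt_atTop 1] with m hm
      have : (0 : ℝ) < m := by positivity
      have hlog : 0 < Real.log m := Real.log_pos (by exact_mod_cast hm)
      have hvar := variance_truncatedDigit_le (truncationLevel m)
      simp only [abs_of_nonneg (truncatedDigit_nonneg _ _), integral_truncatedDigit,
        NNReal.coe_zero, add_zero] at hvar ⊢
      calc _ ≤ m * (truncationLevel m * M m + 64 * M m * M m) / (m * Real.log m) ^ 2 := by gcongr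
        _ = _ := by field_simp

lemma gaussMeasure_exists_lt_natFloor_le (N m : ℕ) :
    gaussMeasure {x | ∃ i < m, N < ⌊1 / gaussMap^[i] x⌋₊} ≤
      ENNReal.ofReal (m / (N + 1) / Real.log 2) := by
  have hmeas : MeasurableSet {x : ℝ | N < ⌊1 / x⌋₊} :=
    measurableSet_lt measurable_const (by fun_prop)
  have hdigit (i : ℕ) : gaussMeasure {x | N < ⌊1 / gaussMap^[i] x⌋₊} ≤
      ENNReal.ofReal (1 / (N + 1) / Real.log 2) := by
    have hpre := (measurePreserving_gaussMap.iterate i).measure_preimage hmeas.nullMeasurableSet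
    rw [gaussMeasure_natFloor_one_div_gt] at hpre
    refine hpre.trans_le (ENNReal.ofReal_le_ofReal ?_)
    gcongr
    exact (Real.log_le_sub_one_of_pos (by positivity)).trans_eq (add_sub_cancel_left _ _)
  calc gaussMeasure {x | ∃ i < m, N < ⌊1 / gaussMap^[i] x⌋₊}
      = gaussMeasure (⋃ i ∈ Finset.range m, {x | N < ⌊1 / gaussMap^[i] x⌋₊}) := by
        congr 1; ext x; simp
    _ ≤ ∑ i ∈ Finset.range m, ENNReal.ofReal (1 / (N + 1) / Real.log 2) :=
        (measure_biUnion_finset_le _ _).trans (Finset.sum_le_sum fun i _ => hdigit i)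
    _ = ENNReal.ofReal (m / (N + 1) / Real.log 2) := by
        rw [Finset.sum_const, Finset.card_range, ← ENNReal.ofReal_nsmul, nsmul_eq_mul]
        ring_nf

lemma eventually_birkhoffSum_truncatedDigit_eq :
    ∀ᶠ z in inMeasure atTop gaussMeasure,
      birkhoffSum gaussMap (truncatedDigit (truncationLevel z.1)) z.1 z.2 =
        birkhoffSum gaussMap (fun x => (⌊1 / x⌋₊ : ℝ)) z.1 z.2 := by
  rw [eventually_inMeasure]
  have hbound : Tendsto (fun m : ℕ => ENNReal.ofReal (m / (truncationLevel m + 1) / Real.log 2))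
      atTop (𝓝 0) := by
    simpa using ENNReal.tendsto_ofReal (tendsto_div_truncationLevel_add_one.div_const (Real.log 2))
  refine tendsto_of_tendsto_of_tendsto_of_le_of_le tendsto_const_nhds hbound (fun _ => zero_le)
    fun m => (measure_mono fun x hx => ?_).trans (gaussMeasure_exists_lt_natFloor_le _ m)
  contrapose! hx
  simp only [mem_ofPred_eq, not_exists, not_and, not_lt, not_not] at hx ⊢
  refine Finset.sum_congr rfl fun i hi => ?_
  rw [truncatedDigit, min_eq_left (hx i (Finset.mem_range.1 hi))]

lemma tendsto_birkhoffSum_natFloor_one_div_div :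
    Tendsto (fun z : ℕ × ℝ => birkhoffSum gaussMap (fun x => (⌊1 / x⌋₊ : ℝ)) z.1 z.2 /
      (z.1 * Real.log z.1)) (inMeasure atTop gaussMeasure) (𝓝 (1 / Real.log 2)) := by
  refine tendsto_birkhoffSum_truncatedDigit_div.congr' ?_
  filter_upwards [eventually_birkhoffSum_truncatedDigit_eq] with z hz
  rw [hz]

end Khinchin

section ContinuedFraction

variable {x : ℝ}

lemma cfa_eq_natFloor (x : ℝ) (m : ℕ) : cfa x m = ⌊1 / gaussMap^[m] x⌋₊ := rfl

lemma irrational_gaussMap (hx : Irrational x) : Irrational (gaussMap x) := by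
  rw [gaussMap, Int.fract, one_div]
  exact hx.inv.sub_intCast _

lemma irrational_iterate_gaussMap (hx : Irrational x) (m : ℕ) : Irrational (gaussMap^[m] x) := by
  induction m with
  | zero => exact hx
  | succ m ih =>
    rw [Function.iterate_succ_apply']
    exact irrational_gaussMap ih

lemma iterate_gaussMap_mem_Ioo (hx : Irrational x) (hx01 : x ∈ Ioo (0 : ℝ) 1) (m : ℕ) :
    gaussMap^[m] x ∈ Ioo (0 : ℝ) 1 := by
  cases m with
  | zero => exact hx01
  | succ m =>
    have hne := (irrational_iterate_gaussMap hx (m + 1)).ne_zero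
    rw [Function.iterate_succ_apply'] at hne ⊢
    have hmem := gaussMap_mem_Ico (gaussMap^[m] x)
    exact ⟨hmem.1.lt_of_ne' hne, hmem.2⟩

lemma cfa_pos (hx : Irrational x) (hx01 : x ∈ Ioo (0 : ℝ) 1) (m : ℕ) : 0 < cfa x m := by
  have h := iterate_gaussMap_mem_Ioo hx hx01 m
  rw [cfa_eq_natFloor, Nat.floor_pos, le_div_iff₀ h.1, one_mul]
  exact h.2.le

lemma monotone_cfq (hx : Irrational x) (hx01 : x ∈ Ioo (0 : ℝ) 1) : Monotone (cfq x) := by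
  refine monotone_nat_of_le_succ fun m => ?_
  cases m with
  | zero => exact zero_le_one
  | succ m => exact Nat.le_add_right_of_le (Nat.le_mul_of_pos_left _ (cfa_pos hx hx01 m))

lemma one_le_cfq_succ (hx : Irrational x) (hx01 : x ∈ Ioo (0 : ℝ) 1) (m : ℕ) :
    1 ≤ cfq x (m + 1) :=
  monotone_cfq hx hx01 (Nat.le_add_left 1 m)

lemma log_cfq_add_cfq_mul_iterate (hx : Irrational x) (hx01 : x ∈ Ioo (0 : ℝ) 1) (m : ℕ) :
    Real.log (cfq x (m + 1) + cfq x m * gaussMap^[m] x) = -birkhoffSum gaussMap Real.log m x := by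
  induction m with
  | zero => simp [cfq]
  | succ m ih =>
    have hy := (iterate_gaussMap_mem_Ioo hx hx01 m).1
    have hq : (1 : ℝ) ≤ cfq x (m + 1) := by exact_mod_cast one_le_cfq_succ hx hx01 m
    have hstep : (cfq x (m + 2) : ℝ) + cfq x (m + 1) * gaussMap^[m + 1] x =
        (cfq x (m + 1) + cfq x m * gaussMap^[m] x) / gaussMap^[m] x := by
      have hdigit := one_div_eq_natFloor_add_gaussMap hy.le
      rw [← cfa_eq_natFloor, ← Function.iterate_succ_apply' gaussMap] at hdigit
      rw [cfq, eq_div_iff hy.ne']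
      have : (1 : ℝ) = (cfa x m + gaussMap^[m + 1] x) * gaussMap^[m] x := by
        rw [← hdigit, one_div_mul_cancel hy.ne']
      push_cast
      linear_combination -(cfq x (m + 1) : ℝ) * this
    rw [hstep, Real.log_div (by positivity) hy.ne', ih, birkhoffSum_succ]
    ring

lemma abs_log_cfq_add_birkhoffSum_log_le (hx : Irrational x) (hx01 : x ∈ Ioo (0 : ℝ) 1) (m : ℕ) :
    |Real.log (cfq x (m + 1)) + birkhoffSum gaussMap Real.log m x| ≤ Real.log 2 := by
  have hy := iterate_gaussMap_mem_Ioo hx hx01 m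
  have hq : (1 : ℝ) ≤ cfq x (m + 1) := by exact_mod_cast one_le_cfq_succ hx hx01 m
  have hmono : (cfq x m : ℝ) ≤ cfq x (m + 1) := by exact_mod_cast monotone_cfq hx hx01 m.le_succ
  have hlower : Real.log (cfq x (m + 1)) ≤ -birkhoffSum gaussMap Real.log m x := by
    rw [← log_cfq_add_cfq_mul_iterate hx hx01]
    exact Real.log_le_log (by positivity) (le_add_of_nonneg_right (mul_nonneg (by simp) hy.1.le))
  have hupper : -birkhoffSum gaussMap Real.log m x ≤ Real.log 2 + Real.log (cfq x (m + 1)) := by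
    rw [← log_cfq_add_cfq_mul_iterate hx hx01, ← Real.log_mul two_ne_zero (by positivity), two_mul]
    refine Real.log_le_log (add_pos_of_pos_of_nonneg (by positivity)
      (mul_nonneg (by simp) hy.1.le)) ?_
    gcongr
    exact (mul_le_of_le_one_right (by simp) hy.2.le).trans hmono
  rw [abs_le]
  constructor <;> linarith

lemma natCast_sumA (x : ℝ) (m : ℕ) :
    (sumA x m : ℝ) = birkhoffSum gaussMap (fun y => (⌊1 / y⌋₊ : ℝ)) m x := by
  rw [sumA, Nat.cast_sum]
  rfl

lemma monotone_sumA (x : ℝ) : Monotone (sumA x) := fun _ _ h =>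
  Finset.sum_le_sum_of_subset (Finset.range_mono h)

lemma le_sumA (hx : Irrational x) (hx01 : x ∈ Ioo (0 : ℝ) 1) (m : ℕ) : m ≤ sumA x m := by
  simpa [sumA] using
    Finset.card_nsmul_le_sum (Finset.range m) (cfa x) 1 fun i _ => cfa_pos hx hx01 i

section SternBrocot

variable {n : ℕ}

lemma le_sbm (hx : Irrational x) (hx01 : x ∈ Ioo (0 : ℝ) 1) {m : ℕ} (h : sumA x m ≤ n) :
    m ≤ sbm x n :=
  le_csSup ⟨n, fun m hm => (le_sumA hx hx01 m).trans hm⟩ h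

lemma sbm_le {m : ℕ} (h : n < sumA x m) : sbm x n ≤ m := by
  refine csSup_le ⟨0, by simp [sumA]⟩ fun k hk => ?_
  exact ((monotone_sumA x).reflect_lt (hk.trans_lt h)).le

lemma neg_log_sbLen (hx : Irrational x) (hx01 : x ∈ Ioo (0 : ℝ) 1) : -Real.log (sbLen x n) =
    Real.log ((sbr x n + 1) * cfq x (sbm x n + 1) + cfq x (sbm x n)) +
      Real.log (cfq x (sbm x n + 1)) := by
  have hq : (1 : ℝ) ≤ cfq x (sbm x n + 1) := by exact_mod_cast one_le_cfq_succ hx hx01 _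
  rw [sbLen, one_div, Real.log_inv, neg_neg]
  push_cast
  rw [Real.log_mul (by positivity) (by positivity)]

lemma two_mul_log_cfq_le_neg_log_sbLen (hx : Irrational x) (hx01 : x ∈ Ioo (0 : ℝ) 1) {m : ℕ}
    (h : sumA x m ≤ n) : 2 * Real.log (cfq x (m + 1)) ≤ -Real.log (sbLen x n) := by
  have hq : (1 : ℝ) ≤ cfq x (m + 1) := by exact_mod_cast one_le_cfq_succ hx hx01 m
  have hmono : (cfq x (m + 1) : ℝ) ≤ cfq x (sbm x n + 1) := by
    exact_mod_cast monotone_cfq hx hx01 (Nat.succ_le_succ (le_sbm hx hx01 h))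
  rw [neg_log_sbLen hx hx01, two_mul]
  gcongr
  refine hmono.trans (le_add_of_le_of_nonneg (le_mul_of_one_le_left ?_ ?_) ?_) <;> simp

lemma neg_log_sbLen_le (hx : Irrational x) (hx01 : x ∈ Ioo (0 : ℝ) 1) {m : ℕ}
    (h : n < sumA x m) :
    -Real.log (sbLen x n) ≤ 2 * Real.log (cfq x (m + 1)) + Real.log (n + 2) := by
  have hq : (1 : ℝ) ≤ cfq x (sbm x n + 1) := by exact_mod_cast one_le_cfq_succ hx hx01 _
  have hmono : (cfq x (sbm x n + 1) : ℝ) ≤ cfq x (m + 1) := by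
    exact_mod_cast monotone_cfq hx hx01 (Nat.succ_le_succ (sbm_le h))
  have hprev : (cfq x (sbm x n) : ℝ) ≤ cfq x (sbm x n + 1) := by
    exact_mod_cast monotone_cfq hx hx01 (Nat.le_succ _)
  have hr : (sbr x n : ℝ) ≤ n := by exact_mod_cast Nat.sub_le _ _
  have hfirst : Real.log ((sbr x n + 1) * cfq x (sbm x n + 1) + cfq x (sbm x n)) ≤
      Real.log (n + 2) + Real.log (cfq x (sbm x n + 1)) := by
    rw [← Real.log_mul (by positivity) (by positivity)]
    exact Real.log_le_log (by positivity) (by nlinarith)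
  have hlog := Real.log_le_log (by positivity) hmono
  rw [neg_log_sbLen hx hx01]
  linarith

end SternBrocot

end ContinuedFraction

section WeakLaws

lemma eventually_irrational_and_mem_Ioo :
    ∀ᶠ z : ℕ × ℝ in inMeasure atTop gaussMeasure, Irrational z.2 ∧ z.2 ∈ Ioo (0 : ℝ) 1 :=
  eventually_inMeasure_of_ae (p := fun z => Irrational z.2 ∧ z.2 ∈ Ioo (0 : ℝ) 1) <|
    .of_forall fun _ => ae_irrational_gaussMeasure.and ae_mem_Ioo_gaussMeasure

lemma tendsto_log_cfq_div :
    Tendsto (fun z : ℕ × ℝ => Real.log (cfq z.2 (z.1 + 1)) / z.1) (inMeasure atTop gaussMeasure)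
      (𝓝 (Real.pi ^ 2 / (12 * Real.log 2))) := by
  have hdiff : Tendsto (fun z : ℕ × ℝ =>
      (Real.log (cfq z.2 (z.1 + 1)) + birkhoffSum gaussMap Real.log z.1 z.2) / z.1)
      (inMeasure atTop gaussMeasure) (𝓝 0) := by
    refine squeeze_zero_norm' ?_
      ((tendsto_const_div_atTop_nhds_zero_nat (Real.log 2)).comp tendsto_fst_inMeasure)
    filter_upwards [eventually_irrational_and_mem_Ioo] with z hz
    rw [norm_div, Real.norm_natCast, Real.norm_eq_abs]
    exact div_le_div_of_nonneg_right (abs_log_cfq_add_birkhoffSum_log_le hz.1 hz.2 z.1)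
      z.1.cast_nonneg
  have hlim := hdiff.sub tendsto_birkhoffSum_log_div
  rw [zero_sub, neg_neg] at hlim
  refine hlim.congr fun z => ?_
  ring

lemma tendsto_sumA_div :
    Tendsto (fun z : ℕ × ℝ => (sumA z.2 z.1 : ℝ) / (z.1 * Real.log z.1))
      (inMeasure atTop gaussMeasure) (𝓝 (1 / Real.log 2)) := by
  simpa only [natCast_sumA] using tendsto_birkhoffSum_natFloor_one_div_div

end WeakLaws

section Depth

variable {a : ℝ}

/-- The scale `n / log n`: the sum of `m` partial quotients is of order `m log m`, so about this
many of them fit into the Stern-Brocot depth `n`. -/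
def depthScale (n : ℕ) : ℝ := n / Real.log n

/-- `⌊a n / log n⌋`, the number of partial quotients at which the weak laws are evaluated; the
random index `m(x, n)` corresponds to `a = log 2`. -/
def quotientCount (a : ℝ) (n : ℕ) : ℕ := ⌊a * depthScale n⌋₊

lemma tendsto_depthScale : Tendsto depthScale atTop atTop := by
  have hinv : Tendsto (fun n : ℕ => Real.log n / n) atTop (𝓝[>] 0) := by
    refine tendsto_nhdsWithin_iff.2 ⟨Real.isLittleO_log_id_atTop.tendsto_div_nhds_zero.comp
      tendsto_natCast_atTop_atTop, ?_⟩
    filter_upwards [eventually_gt_atTop 1] with n hn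
    exact div_pos (Real.log_pos (by exact_mod_cast hn)) (by positivity)
  exact hinv.inv_tendsto_nhdsGT_zero.congr fun n => inv_div _ _

lemma tendsto_quotientCount (ha : 0 < a) : Tendsto (quotientCount a) atTop atTop :=
  tendsto_nat_floor_atTop.comp (tendsto_depthScale.const_mul_atTop ha)

lemma tendsto_quotientCount_div_depthScale (ha : 0 < a) :
    Tendsto (fun n => quotientCount a n / depthScale n) atTop (𝓝 a) :=
  (tendsto_nat_floor_mul_div_atTop ha.le).comp tendsto_depthScale

lemma tendsto_log_quotientCount_div_log (ha : 0 < a) :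
    Tendsto (fun n => Real.log (quotientCount a n) / Real.log n) atTop (𝓝 1) := by
  have hratio := ((tendsto_quotientCount_div_depthScale ha).log ha.ne').div_atTop
    tendsto_log_natCast_atTop
  have hlim := (hratio.add_const 1).sub tendsto_log_log_div_log
  rw [zero_add, sub_zero] at hlim
  refine hlim.congr' ?_
  filter_upwards [(tendsto_quotientCount ha).eventually_ne_atTop 0,
    eventually_gt_atTop 1] with n hM hn
  have hlog : 0 < Real.log n := Real.log_pos (by exact_mod_cast hn)
  have hn0 : (n : ℝ) ≠ 0 := by positivity
  rw [depthScale, Real.log_div (by exact_mod_cast hM) (by positivity), Real.log_div hn0 hlog.ne']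
  field_simp
  ring

lemma tendsto_quotientCount_mul_log_div (ha : 0 < a) :
    Tendsto (fun n => quotientCount a n * Real.log (quotientCount a n) / n) atTop (𝓝 a) := by
  have hlim := (tendsto_quotientCount_div_depthScale ha).mul (tendsto_log_quotientCount_div_log ha)
  rw [mul_one] at hlim
  refine hlim.congr' ?_
  filter_upwards [eventually_gt_atTop 1] with n hn
  have hlog : 0 < Real.log n := Real.log_pos (by exact_mod_cast hn)
  rw [depthScale]
  field_simp

lemma tendsto_sumA_quotientCount_div (ha : 0 < a) :
    Tendsto (fun z : ℕ × ℝ => (sumA z.2 (quotientCount a z.1) : ℝ) / z.1)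
      (inMeasure atTop gaussMeasure) (𝓝 (a / Real.log 2)) := by
  have hlim := (tendsto_sumA_div.comp
    (tendsto_inMeasure_of_tendsto (tendsto_quotientCount ha))).mul
    ((tendsto_quotientCount_mul_log_div ha).comp tendsto_fst_inMeasure)
  rw [one_div_mul_eq_div] at hlim
  refine hlim.congr' ?_
  filter_upwards [tendsto_fst_inMeasure.eventually
    ((tendsto_quotientCount ha).eventually_gt_atTop 1)] with z hz
  have hlog : 0 < Real.log (quotientCount a z.1) := Real.log_pos (by exact_mod_cast hz)
  have : (0 : ℝ) < quotientCount a z.1 := by positivity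
  simp only [Function.comp_apply]
  field_simp

lemma tendsto_log_cfq_quotientCount_div (ha : 0 < a) :
    Tendsto (fun z : ℕ × ℝ => Real.log (cfq z.2 (quotientCount a z.1 + 1)) / depthScale z.1)
      (inMeasure atTop gaussMeasure) (𝓝 (Real.pi ^ 2 / (12 * Real.log 2) * a)) := by
  have hlim := (tendsto_log_cfq_div.comp
    (tendsto_inMeasure_of_tendsto (tendsto_quotientCount ha))).mul
    ((tendsto_quotientCount_div_depthScale ha).comp tendsto_fst_inMeasure)
  refine hlim.congr' ?_
  filter_upwards [tendsto_fst_inMeasure.eventually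
    ((tendsto_quotientCount ha).eventually_ne_atTop 0)] with z hz
  exact div_mul_div_cancel₀ (Nat.cast_ne_zero.2 hz)

lemma eventually_sumA_quotientCount_le (ha : 0 < a) (ha2 : a < Real.log 2) :
    ∀ᶠ z in inMeasure atTop gaussMeasure, sumA z.2 (quotientCount a z.1) ≤ z.1 := by
  filter_upwards [(tendsto_sumA_quotientCount_div ha).eventually_lt_const
    ((div_lt_one log_two_pos).2 ha2),
    tendsto_fst_inMeasure.eventually (eventually_gt_atTop 0)] with z hz hpos
  rw [div_lt_one (Nat.cast_pos.2 hpos)] at hz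
  exact_mod_cast hz.le

lemma eventually_lt_sumA_quotientCount (ha : Real.log 2 < a) :
    ∀ᶠ z in inMeasure atTop gaussMeasure, z.1 < sumA z.2 (quotientCount a z.1) := by
  filter_upwards [(tendsto_sumA_quotientCount_div (log_two_pos.trans ha)).eventually_const_lt
    ((one_lt_div log_two_pos).2 ha),
    tendsto_fst_inMeasure.eventually (eventually_gt_atTop 0)] with z hz hpos
  rw [one_lt_div (Nat.cast_pos.2 hpos)] at hz
  exact_mod_cast hz

lemma tendsto_log_add_two_div_depthScale :
    Tendsto (fun n : ℕ => Real.log (n + 2) / depthScale n) atTop (𝓝 0) := by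
  have hsq : Tendsto (fun n : ℕ => 2 * (Real.log n ^ 2 / n)) atTop (𝓝 0) := by
    simpa using ((Real.isLittleO_pow_log_id_atTop (n := 2)).tendsto_div_nhds_zero.comp
      tendsto_natCast_atTop_atTop).const_mul 2
  refine squeeze_zero' ?_ ?_ hsq
  · filter_upwards [tendsto_depthScale.eventually_gt_atTop 0] with n hn
    exact div_nonneg (Real.log_nonneg (by linarith [n.cast_nonneg (α := ℝ)])) hn.le
  · filter_upwards [eventually_ge_atTop 2] with n hn
    have hn2 : (2 : ℝ) ≤ n := by exact_mod_cast hn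
    have hlog : 0 < Real.log n := Real.log_pos (by linarith)
    have hle : Real.log (n + 2) ≤ 2 * Real.log n := by
      rw [← Nat.cast_two (R := ℝ), ← Real.log_pow, Nat.cast_two]
      exact Real.log_le_log (by positivity) (by nlinarith)
    calc Real.log (n + 2) / depthScale n ≤ 2 * Real.log n / depthScale n := by
          gcongr
          exact div_nonneg n.cast_nonneg hlog.le
      _ = 2 * (Real.log n ^ 2 / n) := by rw [depthScale]; field_simp

lemma eventually_two_mul_log_cfq_le_neg_log_sbLen (ha : 0 < a) (ha2 : a < Real.log 2) :
    ∀ᶠ z in inMeasure atTop gaussMeasure,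
      2 * Real.log (cfq z.2 (quotientCount a z.1 + 1)) ≤ -Real.log (sbLen z.2 z.1) := by
  filter_upwards [eventually_sumA_quotientCount_le ha ha2,
    eventually_irrational_and_mem_Ioo] with z hz hx
  exact two_mul_log_cfq_le_neg_log_sbLen hx.1 hx.2 hz

lemma eventually_neg_log_sbLen_le (ha : Real.log 2 < a) :
    ∀ᶠ z in inMeasure atTop gaussMeasure, -Real.log (sbLen z.2 z.1) ≤
      2 * Real.log (cfq z.2 (quotientCount a z.1 + 1)) + Real.log (z.1 + 2) := by
  filter_upwards [eventually_lt_sumA_quotientCount ha,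
    eventually_irrational_and_mem_Ioo] with z hz hx
  exact neg_log_sbLen_le hx.1 hx.2 hz

lemma tendsto_neg_log_sbLen_div_depthScale :
    Tendsto (fun z : ℕ × ℝ => -Real.log (sbLen z.2 z.1) / depthScale z.1)
      (inMeasure atTop gaussMeasure) (𝓝 (Real.pi ^ 2 / 6)) := by
  have hscale : ∀ᶠ z : ℕ × ℝ in inMeasure atTop gaussMeasure, 0 < depthScale z.1 :=
    tendsto_fst_inMeasure.eventually (tendsto_depthScale.eventually_gt_atTop 0)
  have hvalue : Tendsto (fun a => 2 * (Real.pi ^ 2 / (12 * Real.log 2) * a)) (𝓝 (Real.log 2))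
      (𝓝 (Real.pi ^ 2 / 6)) := by
    have := log_two_pos
    have heq : 2 * (Real.pi ^ 2 / (12 * Real.log 2) * Real.log 2) = Real.pi ^ 2 / 6 := by
      field_simp
      norm_num
    exact heq ▸ (continuous_const_mul _ |>.const_mul 2).tendsto _
  refine tendsto_order.2 ⟨fun b hb => ?_, fun b hb => ?_⟩
  · obtain ⟨a, hba, ha, ha2⟩ := (((hvalue.mono_left nhdsWithin_le_nhds).eventually_const_lt hb).and
      (Ioo_mem_nhdsLT log_two_pos)).exists
    filter_upwards [((tendsto_log_cfq_quotientCount_div ha).const_mul 2).eventually_const_lt hba,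
      eventually_two_mul_log_cfq_le_neg_log_sbLen ha ha2, hscale] with z hz hle hs
    rw [← mul_div_assoc] at hz
    exact hz.trans_le (by gcongr)
  · obtain ⟨a, hab, ha⟩ := (((hvalue.mono_left nhdsWithin_le_nhds).eventually_lt_const hb).and
      (self_mem_nhdsWithin (s := Ioi (Real.log 2)))).exists
    have hupper := ((tendsto_log_cfq_quotientCount_div (log_two_pos.trans ha)).const_mul 2).add
      (tendsto_log_add_two_div_depthScale.comp tendsto_fst_inMeasure)
    rw [add_zero] at hupper
    filter_upwards [hupper.eventually_lt_const hab, eventually_neg_log_sbLen_le ha, hscale]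
      with z hz hle hs
    rw [Function.comp_apply, ← mul_div_assoc, ← add_div] at hz
    exact lt_of_le_of_lt (by gcongr) hz

end Depth

/-- The Stern-Brocot sequence of partitions is log-balanced in measure with respect to the
Lebesgue measure on `[0,1]`, with weight function `f_{𝒮ℬ}(n) = (π²/6) n / log n`. -/
theorem sternBrocot_logBalanced_in_measure :
    TendstoInMeasure (volume.restrict (Set.Icc (0 : ℝ) 1))
      (fun (n : ℕ) (x : ℝ) =>
        -Real.log (sbLen x n) / (Real.pi ^ 2 / 6 * (n / Real.log n)))
      atTop (fun _ => (1 : ℝ)) := by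
  have hlim := tendsto_neg_log_sbLen_div_depthScale.div_const (Real.pi ^ 2 / 6)
  rw [div_self (by positivity)] at hlim
  rw [tendstoInMeasure_const_iff]
  refine (hlim.congr fun z => ?_).mono_left
    (inMeasure_mono ENNReal.ofReal_ne_top volume_le_smul_gaussMeasure)
  rw [div_div, mul_comm, depthScale]
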